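/- arXiv:2402.13893 — 4 statements merged into one kernel-verified Lean document; each statement's English description precedes it below -/
import Mathlib

section
/- For every odd integer n ≥ 3, m(n,2) = (n+3)/2. -/
/-- The Weyl group orbit `J(n,j)` of the `j`-th fundamental weight of `SU(n)`:
vectors `(∑_{i ∈ A} e_i) - (j/n)·(e_1 + … + e_n)` for `j`-element subsets `A` of `{1,…,n}`. -/
def fundWeightOrbit (n j : ℕ) : Set (Fin n → ℝ) :=
  {v | ∃ A : Finset (Fin n), A.card = j ∧
      v = fun i => (if i ∈ A then (1 : ℝ) else 0) - (j : ℝ) / (n : ℝ)}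

/-- `m(n,j)`: the minimal cardinality of a finite subset `T ⊆ J(n,j)` with `0 ∈ Conv(T)`. -/
noncomputable def minCardZeroConv (n j : ℕ) : ℕ :=
  sInf {k | ∃ T : Finset (Fin n → ℝ), ↑T ⊆ fundWeightOrbit n j ∧ T.card = k ∧
    (0 : Fin n → ℝ) ∈ convexHull ℝ (T : Set (Fin n → ℝ))}

/-!
After rescaling by `n / j`, the coefficients of a convex combination of elements of `J(n,j)` equal
to `0` are the weights of a fractional perfect matching of the complete `j`-uniform hypergraph on
`n` vertices, and conversely. So `m(n,j)` is the least number of edges carrying such a matching.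

Let `j = 2` and `n` odd. The weights, all at most `1`, add up to `n / 2`, which is not an integer,
so some edge `uv` has weight `x` with `0 < x < 1`. There are then other edges through `u` and
through `v`; they are distinct and have weight at most `1 - x`. These three edges already have
`∑ (1 - weight) ≥ 1 + x`, while over all `k` edges this sum is `k - n / 2`; hence `k > n / 2 + 1`.
Equality `k = (n + 3) / 2` holds for a triangle with weights `1 / 2` and disjoint edges with
weight `1`.
-/

open Finset

section VertexWeight

variable {α : Type*} [DecidableEq α]

/-- The total weight at the vertex `i` of a weighted hypergraph `w`, i.e. of a finitely supported
function on finite sets, whose support is the set of edges. -/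
noncomputable def vertexWeight (i : α) : (Finset α →₀ ℝ) →ₗ[ℝ] ℝ :=
  Finsupp.linearCombination ℝ fun A => if i ∈ A then 1 else 0

theorem vertexWeight_eq_sum_of_support_subset {w : Finset α →₀ ℝ} {F : Finset (Finset α)}
    (hF : w.support ⊆ F) (i : α) : vertexWeight i w = ∑ A ∈ F with i ∈ A, w A := by
  rw [vertexWeight, Finsupp.linearCombination_apply, Finsupp.sum_of_support_subset _ hF _ (by simp),
    sum_filter]
  simp only [smul_eq_mul, mul_ite, mul_one, mul_zero]

theorem vertexWeight_eq_sum (w : Finset α →₀ ℝ) (i : α) :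
    vertexWeight i w = ∑ A ∈ w.support with i ∈ A, w A :=
  vertexWeight_eq_sum_of_support_subset Subset.rfl i

theorem vertexWeight_indicator_const (F : Finset (Finset α)) (c : ℝ) (i : α) :
    vertexWeight i (Finsupp.indicator F fun _ _ => c) = #{A ∈ F | i ∈ A} * c := by
  rw [vertexWeight_eq_sum_of_support_subset (Finsupp.support_indicator_subset _ _), ← nsmul_eq_mul]
  refine sum_eq_card_nsmul fun A hA => ?_
  rw [Finsupp.indicator_of_mem (mem_filter.1 hA).1]

theorem sum_vertexWeight (s : Finset α) (w : Finset α →₀ ℝ) :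
    ∑ i ∈ s, vertexWeight i w = ∑ A ∈ w.support, #(s ∩ A) * w A := by
  simp only [vertexWeight_eq_sum, sum_filter]
  rw [sum_comm]
  refine sum_congr rfl fun A _ => ?_
  rw [← sum_filter, filter_mem_eq_inter, sum_const, nsmul_eq_mul]

theorem sum_le_vertexWeight {w : Finset α →₀ ℝ} (hw : ∀ A, 0 ≤ w A) {i : α}
    {F : Finset (Finset α)} (hF : ∀ A ∈ F, i ∈ A) : ∑ A ∈ F, w A ≤ vertexWeight i w := by
  rw [vertexWeight_eq_sum_of_support_subset (subset_union_left (s₂ := F))]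
  exact sum_le_sum_of_subset_of_nonneg
    (fun A hA => mem_filter.2 ⟨mem_union_right _ hA, hF A hA⟩) fun A _ _ => hw A

end VertexWeight

/-- A fractional perfect matching of the complete `j`-uniform hypergraph on the finite set `s`,
encoded by its weight function; the edges of positive weight form its support. The weight `0` at
vertices outside `s` forces these edges to be subsets of `s`. -/
structure IsFractionalPerfectMatching {α : Type*} [DecidableEq α] (j : ℕ) (s : Finset α)
    (w : Finset α →₀ ℝ) : Prop where
  sized_support : (w.support : Set (Finset α)).Sized j
  nonneg (A : Finset α) : 0 ≤ w A
  vertexWeight_eq (i : α) : vertexWeight i w = if i ∈ s then 1 else 0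

namespace IsFractionalPerfectMatching

variable {α : Type*} [DecidableEq α] {j : ℕ} {s t : Finset α} {v w : Finset α →₀ ℝ} {A B : Finset α}

theorem pos_of_mem_support (hw : IsFractionalPerfectMatching j s w) (hA : A ∈ w.support) :
    0 < w A :=
  (hw.nonneg A).lt_of_ne' (Finsupp.mem_support_iff.1 hA)

theorem subset_of_mem_support (hw : IsFractionalPerfectMatching j s w) (hA : A ∈ w.support) :
    A ⊆ s := by
  intro i hi
  by_contra his
  have hle := sum_le_vertexWeight hw.nonneg (F := {A}) (by simpa using hi)
  rw [sum_singleton, hw.vertexWeight_eq, if_neg his] at hle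
  exact hle.not_gt (hw.pos_of_mem_support hA)

theorem mul_degree_eq_card (hw : IsFractionalPerfectMatching j s w) : j * w.degree = #s := by
  calc (j : ℝ) * w.degree = ∑ A ∈ w.support, #(s ∩ A) * w A := by
        rw [Finsupp.degree_apply, mul_sum]
        refine sum_congr rfl fun A hA => ?_
        rw [inter_eq_right.2 (hw.subset_of_mem_support hA), hw.sized_support hA]
    _ = ∑ i ∈ s, vertexWeight i w := (sum_vertexWeight s w).symm
    _ = #s := by
        rw [sum_congr rfl fun i hi => (hw.vertexWeight_eq i).trans (if_pos hi)]
        simp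

theorem sum_le_one (hw : IsFractionalPerfectMatching j s w) {i : α} {F : Finset (Finset α)}
    (hF : ∀ A ∈ F, i ∈ A) : ∑ A ∈ F, w A ≤ 1 := by
  refine (sum_le_vertexWeight hw.nonneg hF).trans ?_
  rw [hw.vertexWeight_eq]
  split_ifs <;> norm_num

theorem add_le_one (hw : IsFractionalPerfectMatching j s w) (hAB : A ≠ B) {i : α}
    (hA : i ∈ A) (hB : i ∈ B) : w A + w B ≤ 1 := by
  rw [← sum_pair hAB]
  exact hw.sum_le_one (i := i) (by simp [hA, hB])

theorem le_one (hw : IsFractionalPerfectMatching j s w) (hj : j ≠ 0) (A : Finset α) : w A ≤ 1 := by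
  by_cases hA : A ∈ w.support
  · obtain ⟨i, hi⟩ : A.Nonempty := card_ne_zero.1 (by rwa [hw.sized_support hA])
    simpa using hw.sum_le_one (F := {A}) (i := i) (by simpa using hi)
  · rw [Finsupp.notMem_support_iff.1 hA]
    exact zero_le_one

theorem exists_lt_one (hw : IsFractionalPerfectMatching j s w) (hjs : ¬ j ∣ #s) :
    ∃ A ∈ w.support, w A < 1 := by
  have hj : j ≠ 0 := by
    rintro rfl
    exact hjs (by simpa using hw.mul_degree_eq_card.symm)
  by_contra! hge
  have hdeg : w.degree = #w.support := by
    rw [Finsupp.degree_apply, sum_congr rfl fun A hA => (hw.le_one hj A).antisymm (hge A hA)]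
    simp
  refine hjs ⟨#w.support, ?_⟩
  have := hw.mul_degree_eq_card
  rw [hdeg] at this
  exact_mod_cast this.symm

theorem exists_ne_of_lt_one (hw : IsFractionalPerfectMatching j s w) {i : α} (hi : i ∈ s)
    (hA : w A < 1) : ∃ B ∈ w.support, B ≠ A ∧ i ∈ B := by
  by_contra! hB
  have hle : vertexWeight i w ≤ ∑ B ∈ {A}, w B := by
    rw [vertexWeight_eq_sum]
    refine sum_le_sum_of_subset_of_nonneg (fun B hBi => ?_) fun B _ _ => hw.nonneg B
    rw [mem_filter] at hBi
    exact mem_singleton.2 (not_imp_not.1 (hB B hBi.1) hBi.2)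
  rw [hw.vertexWeight_eq, if_pos hi, sum_singleton] at hle
  exact hle.not_gt hA

theorem sum_one_sub_le (hw : IsFractionalPerfectMatching j s w) (hj : j ≠ 0)
    {F : Finset (Finset α)} (hF : F ⊆ w.support) :
    ∑ A ∈ F, (1 - w A) ≤ #w.support - #s / j := by
  calc ∑ A ∈ F, (1 - w A) ≤ ∑ A ∈ w.support, (1 - w A) :=
        sum_le_sum_of_subset_of_nonneg hF fun A _ _ => sub_nonneg.2 (hw.le_one hj A)
    _ = #w.support - w.degree := by simp [sum_sub_distrib, Finsupp.degree_apply]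
    _ = #w.support - #s / j := by
        rw [← hw.mul_degree_eq_card, mul_div_cancel_left₀ _ (by exact_mod_cast hj)]

theorem card_add_three_le_two_mul_card_support (hw : IsFractionalPerfectMatching 2 s w)
    (hs : Odd #s) : #s + 3 ≤ 2 * #w.support := by
  obtain ⟨A, hA, hA1⟩ := hw.exists_lt_one hs.not_two_dvd_nat
  obtain ⟨u, v, -, rfl⟩ := card_eq_two.1 (hw.sized_support hA)
  have hus : u ∈ s := hw.subset_of_mem_support hA (by simp)
  have hvs : v ∈ s := hw.subset_of_mem_support hA (by simp)
  obtain ⟨B, hB, hBA, huB⟩ := hw.exists_ne_of_lt_one hus hA1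
  obtain ⟨C, hC, hCA, hvC⟩ := hw.exists_ne_of_lt_one hvs hA1
  have hBC : B ≠ C := by
    rintro rfl
    refine hBA (eq_of_subset_of_card_le (by simp [insert_subset_iff, huB, hvC]) ?_).symm
    rw [hw.sized_support hA, hw.sized_support hB]
  have hdef := hw.sum_one_sub_le two_ne_zero (F := {{u, v}, B, C})
    (by simp only [insert_subset_iff, singleton_subset_iff, hA, hB, hC, and_self])
  rw [sum_insert (by simp [hBA.symm, hCA.symm]), sum_pair hBC] at hdef
  have hAB : w {u, v} + w B ≤ 1 := hw.add_le_one hBA.symm (by simp) huB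
  have hAC : w {u, v} + w C ≤ 1 := hw.add_le_one hCA.symm (by simp) hvC
  have hA0 : 0 < w {u, v} := hw.pos_of_mem_support hA
  have hlt : (#s : ℝ) + 2 < 2 * #w.support := by
    push_cast at hdef
    linarith
  exact_mod_cast hlt

theorem add (hv : IsFractionalPerfectMatching j s v) (hw : IsFractionalPerfectMatching j t w)
    (hst : Disjoint s t) : IsFractionalPerfectMatching j (s ∪ t) (v + w) where
  sized_support := by
    refine Set.Sized.mono (coe_subset.2 Finsupp.support_add) ?_
    rw [coe_union, Set.sized_union]
    exact ⟨hv.sized_support, hw.sized_support⟩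
  nonneg _ := add_nonneg (hv.nonneg _) (hw.nonneg _)
  vertexWeight_eq i := by
    have := disjoint_left.1 hst
    rw [map_add, hv.vertexWeight_eq, hw.vertexWeight_eq]
    by_cases hi : i ∈ s <;> simp_all

theorem indicator_inv_of_regular {F : Finset (Finset α)} {d : ℕ}
    (hF : (F : Set (Finset α)).Sized j) (hd : d ≠ 0)
    (hreg : ∀ i, #{A ∈ F | i ∈ A} = if i ∈ s then d else 0) :
    IsFractionalPerfectMatching j s (Finsupp.indicator F fun _ _ => (d : ℝ)⁻¹) where
  sized_support := hF.mono (coe_subset.2 (Finsupp.support_indicator_subset _ _))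
  nonneg A := by
    rw [Finsupp.indicator_apply]
    split_ifs <;> positivity
  vertexWeight_eq i := by
    rw [vertexWeight_indicator_const, hreg]
    split_ifs
    · exact mul_inv_cancel₀ (by exact_mod_cast hd)
    · simp

end IsFractionalPerfectMatching

section Constructions

variable {α : Type*} [DecidableEq α] {j : ℕ} {s t : Finset α}

theorem card_filter_mem_powersetCard (hj : j ≠ 0) (s : Finset α) (i : α) :
    #{A ∈ powersetCard j s | i ∈ A} = if i ∈ s then (#s - 1).choose (j - 1) else 0 := by
  split_ifs with hi
  · simpa using card_filter_powersetCard_subset {i} s j (by simpa) (by rw [card_singleton]; lia)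
  · rw [card_eq_zero, filter_eq_empty_iff]
    exact fun A hA hiA => hi ((mem_powersetCard.1 hA).1 hiA)

theorem card_filter_mem_parts (P : Finpartition s) (i : α) :
    #{A ∈ P.parts | i ∈ A} = if i ∈ s then 1 else 0 := by
  split_ifs with hi
  · rw [card_eq_one, singleton_iff_unique_mem]
    simpa using P.existsUnique_mem hi
  · rw [card_eq_zero, filter_eq_empty_iff]
    exact fun A hA hiA => hi (P.le hA hiA)

theorem exists_finpartition_sized (hj : j ≠ 0) (hjs : j ∣ #s) :
    ∃ P : Finpartition s, (P.parts : Set (Finset α)).Sized j ∧ #P.parts = #s / j := by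
  obtain ⟨q, hq⟩ := hjs
  have hdiv : #s / j = q := by rw [hq, Nat.mul_div_cancel_left q hj.pos]
  rcases eq_or_ne q 0 with rfl | hq0
  · obtain rfl : s = ∅ := card_eq_zero.1 hq
    exact ⟨⊥, by simp, by simp⟩
  · obtain ⟨P, hP, hPcard⟩ := Finpartition.exists_equipartition_card_eq s hq0
      (hq ▸ Nat.le_mul_of_pos_left q hj.pos)
    have hlarge : #{A ∈ P.parts | #A = #s / #P.parts + 1} = 0 := by
      rw [hP.card_large_parts_eq_mod, hPcard, hq, Nat.mul_mod_left]
    rw [card_eq_zero, filter_eq_empty_iff] at hlarge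
    refine ⟨P, fun A hA => ?_, hPcard.trans hdiv.symm⟩
    rw [(hP.card_part_eq_average_iff hA).2 (hlarge hA), hPcard, hq,
      Nat.mul_div_cancel _ hq0.pos]

theorem exists_isFractionalPerfectMatching_of_le_card (hj : j ≠ 0) (hjs : j ≤ #s) :
    ∃ w, IsFractionalPerfectMatching j s w ∧ #w.support ≤ (#s).choose j := by
  refine ⟨_, .indicator_inv_of_regular (F := powersetCard j s) (Set.sized_powersetCard s j) ?_
    (card_filter_mem_powersetCard hj s), ?_⟩
  · exact (Nat.choose_pos (by lia)).ne'
  · exact (card_le_card (Finsupp.support_indicator_subset _ _)).trans_eq (card_powersetCard j s)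

theorem exists_isFractionalPerfectMatching_of_dvd_card (hj : j ≠ 0) (hjs : j ∣ #s) :
    ∃ w, IsFractionalPerfectMatching j s w ∧ #w.support ≤ #s / j := by
  obtain ⟨P, hPj, hPcard⟩ := exists_finpartition_sized hj hjs
  exact ⟨_, .indicator_inv_of_regular hPj one_ne_zero (card_filter_mem_parts P),
    (card_le_card (Finsupp.support_indicator_subset _ _)).trans_eq hPcard⟩

theorem exists_isFractionalPerfectMatching_of_dvd_card_sdiff (hj : j ≠ 0) (hts : t ⊆ s)
    (hjt : j ≤ #t) (hdvd : j ∣ #(s \ t)) :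
    ∃ w, IsFractionalPerfectMatching j s w ∧ #w.support ≤ (#t).choose j + #(s \ t) / j := by
  obtain ⟨v, hv, hvcard⟩ := exists_isFractionalPerfectMatching_of_le_card hj hjt
  obtain ⟨w, hw, hwcard⟩ := exists_isFractionalPerfectMatching_of_dvd_card hj hdvd
  refine ⟨v + w, ?_, ?_⟩
  · simpa [union_sdiff_of_subset hts] using hv.add hw disjoint_sdiff
  · exact (card_le_card Finsupp.support_add).trans ((card_union_le _ _).trans (by gcongr))

theorem isLeast_card_support_two_of_odd (hs3 : 3 ≤ #s) (hs : Odd #s) :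
    IsLeast {k | ∃ w, IsFractionalPerfectMatching 2 s w ∧ #w.support = k} ((#s + 3) / 2) := by
  have hlower {w : Finset α →₀ ℝ} (hw : IsFractionalPerfectMatching 2 s w) :
      (#s + 3) / 2 ≤ #w.support := by
    have := hw.card_add_three_le_two_mul_card_support hs
    lia
  constructor
  · obtain ⟨t, hts, ht⟩ := exists_subset_card_eq hs3
    have hcard : #(s \ t) = #s - 3 := by rw [card_sdiff_of_subset hts, ht]
    obtain ⟨w, hw, hwcard⟩ := exists_isFractionalPerfectMatching_of_dvd_card_sdiff two_ne_zero hts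
      (by lia) (by grind)
    refine ⟨w, hw, (hlower hw).antisymm' (hwcard.trans_eq ?_)⟩
    rw [hcard, ht, show Nat.choose 3 2 = 3 from rfl]
    lia
  · rintro _ ⟨w, hw, rfl⟩
    exact hlower hw

end Constructions

theorem finsupp_degree_smul {R ι : Type*} [Semiring R] (a : R) (c : ι →₀ R) :
    (a • c).degree = a * c.degree :=
  (Finsupp.sum_smul_index (h := fun _ x => x) fun _ => rfl).trans (Finsupp.mul_sum a c).symm

theorem mem_convexHull_image_iff_exists_finsupp {𝕜 ι E : Type*} [Field 𝕜] [LinearOrder 𝕜]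
    [IsStrictOrderedRing 𝕜] [AddCommGroup E] [Module 𝕜 E] {f : ι → E} {F : Finset ι} {x : E} :
    x ∈ convexHull 𝕜 (f '' F) ↔ ∃ c : ι →₀ 𝕜, c.support ⊆ F ∧ (∀ i, 0 ≤ c i) ∧
      c.degree = 1 ∧ Finsupp.linearCombination 𝕜 f c = x := by
  classical
  constructor
  · refine fun hx => convexHull_min (t := {x | ∃ c : ι →₀ 𝕜, c.support ⊆ F ∧ (∀ i, 0 ≤ c i) ∧
      c.degree = 1 ∧ Finsupp.linearCombination 𝕜 f c = x}) ?_ ?_ hx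
    · rintro _ ⟨i, hi, rfl⟩
      exact ⟨Finsupp.single i 1, Finsupp.support_single_subset.trans (by simpa using hi),
        fun k => Finsupp.single_nonneg.2 zero_le_one k, Finsupp.degree_single i 1, by simp⟩
    · rintro _ ⟨c, hcF, hc0, hc1, rfl⟩ _ ⟨d, hdF, hd0, hd1, rfl⟩ a b ha hb hab
      refine ⟨a • c + b • d, ?_, fun i => ?_, ?_, by simp⟩
      · exact Finsupp.support_add.trans (union_subset (Finsupp.support_smul.trans hcF)
          (Finsupp.support_smul.trans hdF))
      · exact add_nonneg (mul_nonneg ha (hc0 i)) (mul_nonneg hb (hd0 i))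
      · rw [map_add, finsupp_degree_smul, finsupp_degree_smul, hc1, hd1, mul_one, mul_one, hab]
  · rintro ⟨c, hcF, hc0, hc1, rfl⟩
    rw [Finsupp.linearCombination_apply, Finsupp.sum]
    exact (convex_convexHull 𝕜 _).sum_mem (fun i _ => hc0 i) hc1
      fun i hi => subset_convexHull 𝕜 _ ⟨i, hcF hi, rfl⟩

section Orbit

variable {n j : ℕ}

/-- The element of the orbit `J(n,j)` attached to `A ⊆ {1,…,n}`, for `A` with `j` elements. -/
noncomputable def orbitVector (n j : ℕ) (A : Finset (Fin n)) : Fin n → ℝ :=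
  fun i => (if i ∈ A then (1 : ℝ) else 0) - (j : ℝ) / (n : ℝ)

theorem orbitVector_injective (n j : ℕ) : Function.Injective (orbitVector n j) := by
  intro A B hAB
  ext i
  have hi := congrFun hAB i
  simp only [orbitVector, sub_left_inj] at hi
  by_cases hA : i ∈ A <;> by_cases hB : i ∈ B <;> simp_all

theorem fundWeightOrbit_eq_image (n j : ℕ) :
    fundWeightOrbit n j = orbitVector n j '' {A | #A = j} := by
  ext v
  exact exists_congr fun A => and_congr_right fun _ => eq_comm

theorem linearCombination_orbitVector_apply (c : Finset (Fin n) →₀ ℝ) (i : Fin n) :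
    Finsupp.linearCombination ℝ (orbitVector n j) c i = vertexWeight i c - j / n * c.degree := by
  rw [vertexWeight, Finsupp.linearCombination_apply, Finsupp.linearCombination_apply,
    Finsupp.degree_apply, Finsupp.sum, Finsupp.sum, Finset.sum_apply, mul_sum, ← sum_sub_distrib]
  refine sum_congr rfl fun A _ => ?_
  simp only [Pi.smul_apply, orbitVector, smul_eq_mul]
  ring

theorem zero_mem_convexHull_orbitVector_image_iff (hn : n ≠ 0) (hj : j ≠ 0)
    {F : Finset (Finset (Fin n))} (hF : (F : Set (Finset (Fin n))).Sized j) :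
    0 ∈ convexHull ℝ (orbitVector n j '' F) ↔
      ∃ w, IsFractionalPerfectMatching j univ w ∧ w.support ⊆ F := by
  have hn' : (n : ℝ) ≠ 0 := by exact_mod_cast hn
  have hj' : (j : ℝ) ≠ 0 := by exact_mod_cast hj
  rw [mem_convexHull_image_iff_exists_finsupp]
  constructor
  · rintro ⟨c, hcF, hc0, hc1, hc⟩
    have hsupp : ((n / j : ℝ) • c).support ⊆ F := Finsupp.support_smul.trans hcF
    refine ⟨(n / j : ℝ) • c, ⟨hF.mono (coe_subset.2 hsupp), fun A => ?_, fun i => ?_⟩, hsupp⟩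
    · exact mul_nonneg (by positivity) (hc0 A)
    · have hi : vertexWeight i c - j / n * c.degree = 0 := by
        rw [← linearCombination_orbitVector_apply, hc, Pi.zero_apply]
      rw [hc1, mul_one, sub_eq_zero] at hi
      rw [map_smul, hi, if_pos (mem_univ i), smul_eq_mul]
      field_simp
  · rintro ⟨w, hw, hwF⟩
    have hdeg : ((j / n : ℝ) • w).degree = 1 := by
      rw [finsupp_degree_smul, div_mul_eq_mul_div, hw.mul_degree_eq_card, card_fin, div_self hn']
    refine ⟨(j / n : ℝ) • w, Finsupp.support_smul.trans hwF, fun A => ?_, hdeg, ?_⟩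
    · exact mul_nonneg (by positivity) (hw.nonneg A)
    · ext i
      rw [linearCombination_orbitVector_apply, hdeg, map_smul, hw.vertexWeight_eq,
        if_pos (mem_univ i), smul_eq_mul, sub_self, Pi.zero_apply]

theorem exists_subset_fundWeightOrbit_card_eq (hn : n ≠ 0) (hj : j ≠ 0)
    {w : Finset (Fin n) →₀ ℝ} (hw : IsFractionalPerfectMatching j univ w) :
    ∃ T : Finset (Fin n → ℝ), ↑T ⊆ fundWeightOrbit n j ∧ #T = #w.support ∧
      0 ∈ convexHull ℝ (T : Set (Fin n → ℝ)) := by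
  classical
  refine ⟨w.support.image (orbitVector n j), ?_,
    card_image_of_injective _ (orbitVector_injective n j), ?_⟩
  · rw [coe_image, fundWeightOrbit_eq_image]
    exact Set.image_mono hw.sized_support
  · rw [coe_image, zero_mem_convexHull_orbitVector_image_iff hn hj hw.sized_support]
    exact ⟨w, hw, Subset.rfl⟩

theorem exists_isFractionalPerfectMatching_card_support_le (hn : n ≠ 0) (hj : j ≠ 0)
    {T : Finset (Fin n → ℝ)} (hT : ↑T ⊆ fundWeightOrbit n j)
    (h0 : 0 ∈ convexHull ℝ (T : Set (Fin n → ℝ))) :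
    ∃ w, IsFractionalPerfectMatching j (univ : Finset (Fin n)) w ∧ #w.support ≤ #T := by
  classical
  rw [fundWeightOrbit_eq_image, subset_set_image_iff] at hT
  obtain ⟨F, hF, rfl⟩ := hT
  rw [coe_image, zero_mem_convexHull_orbitVector_image_iff hn hj hF] at h0
  obtain ⟨w, hw, hwF⟩ := h0
  refine ⟨w, hw, ?_⟩
  rw [card_image_of_injective _ (orbitVector_injective n j)]
  exact card_le_card hwF

theorem isLeast_minCardZeroConv (hj : j ≠ 0) (hjn : j ≤ n) :
    IsLeast {k | ∃ w, IsFractionalPerfectMatching j (univ : Finset (Fin n)) w ∧ #w.support = k}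
      (minCardZeroConv n j) := by
  have hn : n ≠ 0 := by lia
  constructor
  · obtain ⟨v, hv, -⟩ := exists_isFractionalPerfectMatching_of_le_card
      (s := (univ : Finset (Fin n))) hj (by rwa [card_fin])
    obtain ⟨T, hT, hTcard, hT0⟩ : minCardZeroConv n j ∈ _ :=
      Nat.sInf_mem ⟨_, exists_subset_fundWeightOrbit_card_eq hn hj hv⟩
    obtain ⟨w, hw, hwT⟩ := exists_isFractionalPerfectMatching_card_support_le hn hj hT hT0
    exact ⟨w, hw, (hwT.trans_eq hTcard).antisymm
      (Nat.sInf_le (exists_subset_fundWeightOrbit_card_eq hn hj hw))⟩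
  · rintro _ ⟨w, hw, rfl⟩
    exact Nat.sInf_le (exists_subset_fundWeightOrbit_card_eq hn hj hw)

end Orbit

/-- For every odd integer `n ≥ 3`, `m(n,2) = (n+3)/2`. -/
theorem minCardZeroConv_two_odd (n : ℕ) (hn : 3 ≤ n) (hodd : Odd n) :
    minCardZeroConv n 2 = (n + 3) / 2 := by
  have hcard : #(univ : Finset (Fin n)) = n := card_fin n
  refine (isLeast_minCardZeroConv two_ne_zero (by lia)).unique ?_
  simpa only [hcard] using
    isLeast_card_support_two_of_odd (s := (univ : Finset (Fin n))) (by rwa [hcard]) (by rwa [hcard])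
end

section
/- If n = j·k with integers j ≥ 1, k ≥ 2 and j ≤ n/2, then m(n,j) = k = n/j. -/
/-!
The vector attached to a nonempty subset `A` is negative at every coordinate outside `A`. So if `0`
is a convex combination of such vectors, the corresponding subsets cover all `n` coordinates, and
`j`-element subsets can only do so if there are at least `n / j` of them. Conversely, the vectors
attached to the blocks of a partition of the coordinates sum to `0`; partitioning into residue
classes modulo `k` gives `k` blocks of size `j`.
-/

theorem zero_mem_convexHull_range_of_sum_eq_zero {𝕜 E κ : Type*} [Field 𝕜] [LinearOrder 𝕜]
    [IsStrictOrderedRing 𝕜] [AddCommGroup E] [Module 𝕜 E] [Fintype κ] [Nonempty κ] {w : κ → E}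
    (hw : ∑ a, w a = 0) : 0 ∈ convexHull 𝕜 (Set.range w) := by
  have hmem : Finset.univ.centerMass (fun _ => (1 : 𝕜)) w ∈ convexHull 𝕜 (Set.range w) :=
    Finset.univ.centerMass_mem_convexHull (fun _ _ => zero_le_one) (by simp [Fintype.card_pos])
      (fun a _ => Set.mem_range_self a)
  simpa only [Finset.centerMass, one_smul, hw, smul_zero] using hmem

section SubsetWeight

variable {ι κ : Type*} [Fintype ι] [DecidableEq ι] [Fintype κ] [DecidableEq κ]

/-- The weight attached to a subset `A` of the coordinates: its indicator function minus the mean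
of that function. The orbit `J(n,j)` consists of the weights of the `j`-element subsets. -/
noncomputable def subsetWeight (A : Finset ι) (i : ι) : ℝ :=
  (if i ∈ A then 1 else 0) - (A.card : ℝ) / Fintype.card ι

theorem fundWeightOrbit_eq_image_subsetWeight (n j : ℕ) :
    fundWeightOrbit n j = subsetWeight '' {A : Finset (Fin n) | A.card = j} := by
  ext v
  constructor <;>
  · rintro ⟨A, rfl, rfl⟩
    exact ⟨A, rfl, by ext i; simp only [subsetWeight, Fintype.card_fin]⟩

theorem subsetWeight_neg_of_notMem {A : Finset ι} (hA : A.Nonempty) {i : ι} (hi : i ∉ A) :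
    subsetWeight A i < 0 := by
  have : Nonempty ι := ⟨i⟩
  have hmean : 0 < (A.card : ℝ) / Fintype.card ι :=
    div_pos (Nat.cast_pos.2 hA.card_pos) (Nat.cast_pos.2 Fintype.card_pos)
  simpa only [subsetWeight, if_neg hi, zero_sub, neg_lt_zero] using hmean

theorem exists_mem_of_zero_mem_convexHull_subsetWeight {𝒜 : Set (Finset ι)}
    (hne : ∀ A ∈ 𝒜, A.Nonempty) (h0 : 0 ∈ convexHull ℝ (subsetWeight '' 𝒜)) (i : ι) :
    ∃ A ∈ 𝒜, i ∈ A := by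
  have hconv : ConvexOn ℝ Set.univ (LinearMap.proj i : (ι → ℝ) →ₗ[ℝ] ℝ) :=
    LinearMap.convexOn _ convex_univ
  obtain ⟨_, ⟨A, hA, rfl⟩, hnonneg⟩ := hconv.exists_ge_of_mem_convexHull (Set.subset_univ _) h0
  exact ⟨A, hA, by_contra fun hi => (subsetWeight_neg_of_notMem (hne A hA) hi).not_ge hnonneg⟩

theorem le_card_mul_of_zero_mem_convexHull {n j : ℕ} (hj : 0 < j) {T : Finset (Fin n → ℝ)}
    (hT : ↑T ⊆ fundWeightOrbit n j) (h0 : 0 ∈ convexHull ℝ (T : Set (Fin n → ℝ))) :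
    n ≤ T.card * j := by
  rw [fundWeightOrbit_eq_image_subsetWeight] at hT
  obtain ⟨𝒜, h𝒜, hinj, rfl⟩ := Finset.exists_subset_injOn_image_eq_of_surjOn _ T hT
  have hne : ∀ A ∈ 𝒜, A.Nonempty := fun A hA => Finset.card_pos.1 (hj.trans_eq (h𝒜 hA).symm)
  rw [Finset.coe_image] at h0
  have hcover : 𝒜.biUnion id = Finset.univ := Finset.eq_univ_of_forall fun i =>
    Finset.mem_biUnion.2 (exists_mem_of_zero_mem_convexHull_subsetWeight hne h0 i)
  calc
    n = (𝒜.biUnion id).card := by rw [hcover, Finset.card_univ, Fintype.card_fin]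
    _ ≤ 𝒜.card * j := Finset.card_biUnion_le_card_mul _ _ _ fun A hA => (h𝒜 hA).le
    _ = (𝒜.image subsetWeight).card * j := by rw [Finset.card_image_of_injOn hinj]

theorem minCardZeroConv_le_card {n j : ℕ} {T : Finset (Fin n → ℝ)}
    (hT : ↑T ⊆ fundWeightOrbit n j) (h0 : 0 ∈ convexHull ℝ (T : Set (Fin n → ℝ))) :
    minCardZeroConv n j ≤ T.card :=
  Nat.sInf_le ⟨T, hT, rfl, h0⟩

theorem le_minCardZeroConv_mul {n j : ℕ} (hj : 0 < j)
    (hex : ∃ T : Finset (Fin n → ℝ), ↑T ⊆ fundWeightOrbit n j ∧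
      0 ∈ convexHull ℝ (T : Set (Fin n → ℝ))) :
    n ≤ minCardZeroConv n j * j := by
  obtain ⟨T, hT, h0⟩ := hex
  have hmin : minCardZeroConv n j ∈ {k | ∃ S : Finset (Fin n → ℝ), ↑S ⊆ fundWeightOrbit n j ∧
      S.card = k ∧ 0 ∈ convexHull ℝ (S : Set (Fin n → ℝ))} :=
    Nat.sInf_mem ⟨T.card, T, hT, rfl, h0⟩
  obtain ⟨S, hS, hcard, hS0⟩ := hmin
  exact hcard ▸ le_card_mul_of_zero_mem_convexHull hj hS hS0

theorem sum_subsetWeight_fiber (c : ι → κ) :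
    ∑ a, subsetWeight ({i | c i = a} : Finset ι) = 0 := by
  ext i
  have : Nonempty ι := ⟨i⟩
  have hcard : ∑ a, (Finset.card {i | c i = a} : ℝ) = Fintype.card ι := by
    exact_mod_cast (Finset.card_eq_sum_card_fiberwise (f := c) fun _ _ => Finset.mem_univ _).symm
  simp [subsetWeight, ← Finset.sum_div, hcard]

theorem exists_card_le_of_card_fiber_eq [Nonempty κ] {n j : ℕ} (c : Fin n → κ)
    (hc : ∀ a, Finset.card {i | c i = a} = j) :
    ∃ T : Finset (Fin n → ℝ), ↑T ⊆ fundWeightOrbit n j ∧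
      0 ∈ convexHull ℝ (T : Set (Fin n → ℝ)) ∧ T.card ≤ Fintype.card κ := by
  refine ⟨Finset.univ.image fun a => subsetWeight {i | c i = a}, ?_, ?_, Finset.card_image_le⟩
  · rw [fundWeightOrbit_eq_image_subsetWeight, Finset.coe_image]
    rintro _ ⟨a, -, rfl⟩
    exact ⟨_, hc a, rfl⟩
  · rw [Finset.coe_image, Finset.coe_univ, Set.image_univ]
    exact zero_mem_convexHull_range_of_sum_eq_zero (sum_subsetWeight_fiber c)

end SubsetWeight

theorem card_fiber_modNat {j k : ℕ} (a : Fin k) :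
    Finset.card {i : Fin (j * k) | i.modNat = a} = j := by
  have hfiber : ({i : Fin (j * k) | i.modNat = a} : Finset _) =
      (Finset.univ ×ˢ {a}).map finProdFinEquiv.toEmbedding := by
    ext i
    simp [Finset.mem_map_equiv, eq_comm]
  rw [hfiber, Finset.card_map, Finset.card_product, Finset.card_univ, Fintype.card_fin,
    Finset.card_singleton, mul_one]

/-- If `n = j·k` with `j ≥ 1`, `k ≥ 2` and `j ≤ n/2`, then `m(n,j) = k`. -/
theorem minCardZeroConv_of_dvd (n j k : ℕ) (hj : 1 ≤ j) (hk : 2 ≤ k)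
    (hn : n = j * k) (hhalf : 2 * j ≤ n) :
    minCardZeroConv n j = k := by
  subst hn
  have : NeZero k := ⟨by lia⟩
  obtain ⟨T, hT, hT0, hTk⟩ := exists_card_le_of_card_fiber_eq Fin.modNat
    (card_fiber_modNat (j := j) (k := k))
  have upper : minCardZeroConv (j * k) j ≤ k :=
    (minCardZeroConv_le_card hT hT0).trans (hTk.trans_eq (Fintype.card_fin k))
  have lower : k * j ≤ minCardZeroConv (j * k) j * j :=
    (mul_comm k j).trans_le (le_minCardZeroConv_mul hj ⟨T, hT, hT0⟩)
  exact upper.antisymm (Nat.le_of_mul_le_mul_right lower hj)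
end

section
/- Let ℓ ≥ 3 be an odd integer. Then the minimal cardinality of a finite subset T ⊆ D(ℓ) with 0 ∈ Conv(T) is exactly 4. (For ℓ = 3 such a minimal set is {(1/2,1/2,1/2), (−1/2,−1/2,1/2), (−1/2,1/2,−1/2), (1/2,−1/2,−1/2)}.) -/
/-!
If a convex combination of vectors with entries `±1/2` vanishes, then the vectors sharing a given
value of a given coordinate carry total weight exactly `1/2`. For odd `ℓ`, two vectors of `D(ℓ)`
always share a coordinate, since negation changes the parity of the number of negative entries, so
any two points carry weight at most `1/2`. At most three points cannot do this: the complement of a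
pair would have weight at least `1/2`, leaving no weight for either point of the pair, so that the
complement, a set of at most one point, would carry all of it.

Conversely, for `i ≠ j` the four vectors whose sets of negative coordinates are `∅`, `{i, j}`,
`{i}ᶜ` and `{j}ᶜ` lie in `D(ℓ)` and sum to zero. They are distinct because of the lower bound.
-/

/-- The Weyl group orbit `D(ℓ)` of the highest weight of a half-spin representation of
`Spin(2ℓ)`: vectors in `ℝ^ℓ` with all coordinates `± 1/2` and an even number of
negative coordinates. -/
def halfSpinOrbit (l : ℕ) : Set (Fin l → ℝ) :=
  {v | (∀ i, v i = 1 / 2 ∨ v i = -(1 / 2)) ∧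
      Even (Finset.univ.filter (fun i => v i = -(1 / 2))).card}

open Finset

lemma exists_subset_pair_of_card_le_two {α : Type*} [DecidableEq α] {S : Finset α} {a : α}
    (ha : a ∈ S) (hS : #S ≤ 2) : ∃ b ∈ S, S ⊆ {a, b} := by
  have herase : #(S.erase a) ≤ 1 := by
    rw [card_erase_of_mem ha]
    lia
  obtain hempty | ⟨b, hb⟩ := (S.erase a).eq_empty_or_nonempty
  · exact ⟨a, ha, subset_insert_iff.mpr (hempty ▸ empty_subset _)⟩
  · have hunique : S.erase a ⊆ {b} := fun x hx =>
      mem_singleton.mpr (card_le_one_iff.mp herase hx hb)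
    exact ⟨b, mem_of_mem_erase hb, subset_insert_iff.mpr hunique⟩

section ConvexHull

variable {𝕜 : Type*} [Field 𝕜] [LinearOrder 𝕜] [IsStrictOrderedRing 𝕜]

lemma sum_le_half_of_sum_mul_eq_zero {α : Type*} {S T : Finset α} (hST : S ⊆ T) {w f : α → 𝕜}
    (hw : ∀ x ∈ T, 0 ≤ w x) (hw_sum : ∑ x ∈ T, w x = 1) (hwf : ∑ x ∈ T, w x * f x = 0)
    (hfT : ∀ x ∈ T, -1 ≤ f x) (hfS : ∀ x ∈ S, 1 ≤ f x) : ∑ x ∈ S, w x ≤ 1 / 2 := by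
  have markov : 2 * ∑ x ∈ S, w x ≤ 1 := calc
    2 * ∑ x ∈ S, w x = ∑ x ∈ S, w x * 2 := by rw [mul_comm, sum_mul]
    _ ≤ ∑ x ∈ S, w x * (f x + 1) := sum_le_sum fun x hx =>
      mul_le_mul_of_nonneg_left (by linarith [hfS x hx]) (hw x (hST hx))
    _ ≤ ∑ x ∈ T, w x * (f x + 1) := sum_le_sum_of_subset_of_nonneg hST fun x hx _ =>
      mul_nonneg (hw x hx) (by linarith [hfT x hx])
    _ = 1 := by simp only [mul_add, mul_one, sum_add_distrib, hwf, hw_sum, zero_add]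
  linarith

lemma two_mul_le_card_of_sum_le_half {α : Type*} {T : Finset α} {w : α → 𝕜} {k : ℕ}
    (hw_sum : ∑ x ∈ T, w x = 1) (h : ∀ S ⊆ T, #S ≤ k → ∑ x ∈ S, w x ≤ 1 / 2) :
    2 * k ≤ #T := by
  classical
  by_contra! hcard
  obtain ⟨V, hVT, hV⟩ := exists_subset_card_eq (min_le_left #T k)
  have hU : #(T \ V) < k := by
    rw [card_sdiff_of_subset hVT]
    lia
  have hsplit : ∑ x ∈ T \ V, w x + ∑ x ∈ V, w x = 1 := (sum_sdiff hVT).trans hw_sum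
  have hV_half : ∑ x ∈ V, w x ≤ 1 / 2 := h V hVT (by lia)
  have hU_half : ∑ x ∈ T \ V, w x ≤ 1 / 2 := h _ sdiff_subset hU.le
  have hV_nonpos : ∑ x ∈ V, w x ≤ 0 := sum_nonpos fun x hx => by
    have hx_notMem : x ∉ T \ V := fun hxU => (mem_sdiff.mp hxU).2 hx
    have hinsert := h (insert x (T \ V)) (insert_subset (hVT hx) sdiff_subset)
      ((card_insert_le _ _).trans hU)
    rw [sum_insert hx_notMem] at hinsert
    linarith
  linarith

variable {E : Type*} [AddCommGroup E] [Module 𝕜 E]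

theorem two_mul_le_card_of_zero_mem_convexHull {T : Finset E} {k : ℕ}
    (h0 : (0 : E) ∈ convexHull 𝕜 (T : Set E))
    (hsep : ∀ S ⊆ T, #S ≤ k → ∃ f : Module.Dual 𝕜 E, (∀ v ∈ T, -1 ≤ f v) ∧ ∀ v ∈ S, 1 ≤ f v) :
    2 * k ≤ #T := by
  obtain ⟨w, hw, hw_sum, hw_zero⟩ := mem_convexHull'.mp h0
  refine two_mul_le_card_of_sum_le_half hw_sum fun S hST hS => ?_
  obtain ⟨f, hfT, hfS⟩ := hsep S hST hS
  refine sum_le_half_of_sum_mul_eq_zero hST hw hw_sum ?_ hfT hfS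
  simpa only [map_sum, map_smul, smul_eq_mul, map_zero] using congrArg f hw_zero

lemma zero_mem_convexHull_range_of_sum_eq_zero_s8 {ι : Type*} [Fintype ι] [Nonempty ι] {v : ι → E}
    (hv : ∑ j, v j = 0) : (0 : E) ∈ convexHull 𝕜 (Set.range v) :=
  mem_convexHull_of_exists_fintype (fun _ => (Fintype.card ι : 𝕜)⁻¹) v
    (fun _ => by positivity) (by simp) Set.mem_range_self (by rw [← smul_sum, hv, smul_zero])

end ConvexHull

section SpinWeight

variable {ι : Type*} [DecidableEq ι]

/-- The weight of the spin representation whose negative coordinates are those in `N`, so that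
weights correspond to finite sets and `D(ℓ)` to the sets of even cardinality. -/
noncomputable def spinWeight (N : Finset ι) : ι → ℝ :=
  fun i => if i ∈ N then -(1 / 2) else 1 / 2

lemma spinWeight_apply_eq_iff {M N : Finset ι} {i : ι} :
    spinWeight M i = spinWeight N i ↔ (i ∈ M ↔ i ∈ N) := by
  by_cases hM : i ∈ M <;> by_cases hN : i ∈ N <;> norm_num [spinWeight, hM, hN]

lemma spinWeight_mul_self (N : Finset ι) (i : ι) : spinWeight N i * spinWeight N i = 1 / 4 := by
  unfold spinWeight
  split_ifs <;> norm_num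

lemma neg_quarter_le_spinWeight_mul (M N : Finset ι) (i : ι) :
    -(1 / 4) ≤ spinWeight M i * spinWeight N i := by
  unfold spinWeight
  split_ifs <;> norm_num

variable [Fintype ι]

lemma exists_spinWeight_apply_eq (hodd : Odd (Fintype.card ι)) {M N : Finset ι}
    (hM : Even #M) (hN : Even #N) : ∃ i, spinWeight M i = spinWeight N i := by
  by_contra! h
  have hcompl : N = Mᶜ := by
    ext i
    have := spinWeight_apply_eq_iff.not.mp (h i)
    rw [mem_compl]
    tauto
  subst hcompl
  exact Nat.not_even_iff_odd.mpr hodd (card_add_card_compl M ▸ hM.add hN)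

lemma spinWeight_empty_add_pair_add_compl_add_compl {i j : ι} (hij : i ≠ j) :
    spinWeight ∅ + spinWeight {i, j} + spinWeight {i}ᶜ + spinWeight {j}ᶜ = 0 := by
  ext k
  obtain rfl | hi := eq_or_ne k i
  · norm_num [spinWeight, hij]
  · by_cases hj : k = j <;> norm_num [spinWeight, hi, hj, hij.symm]

end SpinWeight

lemma halfSpinOrbit_eq_image (l : ℕ) :
    halfSpinOrbit l = spinWeight '' {N : Finset (Fin l) | Even #N} := by
  ext v
  constructor
  · rintro ⟨hv, heven⟩
    refine ⟨_, heven, funext fun i => ?_⟩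
    rcases hv i with hi | hi <;> norm_num [spinWeight, hi]
  · rintro ⟨N, hN, rfl⟩
    have hneg : univ.filter (fun i => spinWeight N i = -(1 / 2)) = N := by
      ext i
      by_cases hi : i ∈ N <;> norm_num [spinWeight, hi]
    refine ⟨fun i => ?_, hneg.symm ▸ hN⟩
    by_cases hi : i ∈ N <;> simp [spinWeight, hi]

lemma spinWeight_mem_halfSpinOrbit {l : ℕ} {N : Finset (Fin l)} (hN : Even #N) :
    spinWeight N ∈ halfSpinOrbit l :=
  halfSpinOrbit_eq_image l ▸ Set.mem_image_of_mem _ hN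

lemma exists_dual_of_mem_halfSpinOrbit {l : ℕ} (hodd : Odd l) {a b : Fin l → ℝ}
    (ha : a ∈ halfSpinOrbit l) (hb : b ∈ halfSpinOrbit l) :
    ∃ f : Module.Dual ℝ (Fin l → ℝ),
      (∀ v ∈ halfSpinOrbit l, -1 ≤ f v) ∧ 1 ≤ f a ∧ 1 ≤ f b := by
  rw [halfSpinOrbit_eq_image] at ha hb ⊢
  obtain ⟨M, hM, rfl⟩ := ha
  obtain ⟨N, hN, rfl⟩ := hb
  obtain ⟨i, hi⟩ := exists_spinWeight_apply_eq (by rwa [Fintype.card_fin]) hM hN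
  have hf (v : Fin l → ℝ) :
      ((4 * spinWeight M i) • LinearMap.proj i : Module.Dual ℝ (Fin l → ℝ)) v =
        4 * (spinWeight M i * v i) := mul_assoc _ _ _
  refine ⟨(4 * spinWeight M i) • LinearMap.proj i, ?_, ?_, ?_⟩
  · rintro _ ⟨P, -, rfl⟩
    linarith [hf (spinWeight P), neg_quarter_le_spinWeight_mul M P i]
  · rw [hf, spinWeight_mul_self]
    norm_num
  · rw [hf, ← hi, spinWeight_mul_self]
    norm_num

theorem four_le_card_of_subset_halfSpinOrbit {l : ℕ} (hodd : Odd l) {T : Finset (Fin l → ℝ)}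
    (hT : ↑T ⊆ halfSpinOrbit l) (h0 : (0 : Fin l → ℝ) ∈ convexHull ℝ (T : Set (Fin l → ℝ))) :
    4 ≤ #T := by
  refine two_mul_le_card_of_zero_mem_convexHull (k := 2) h0 fun S hST hS => ?_
  obtain rfl | ⟨a, ha⟩ := S.eq_empty_or_nonempty
  · exact ⟨0, by simp, by simp⟩
  obtain ⟨b, hb, hSab⟩ := exists_subset_pair_of_card_le_two ha hS
  obtain ⟨f, hf, hfa, hfb⟩ := exists_dual_of_mem_halfSpinOrbit hodd (hT (hST ha)) (hT (hST hb))
  refine ⟨f, fun v hv => hf v (hT hv), fun v hv => ?_⟩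
  obtain rfl | rfl := by simpa using hSab hv
  exacts [hfa, hfb]

theorem exists_card_le_four_zero_mem_convexHull {l : ℕ} (hl : 3 ≤ l) (hodd : Odd l) :
    ∃ T : Finset (Fin l → ℝ), ↑T ⊆ halfSpinOrbit l ∧ #T ≤ 4 ∧
      (0 : Fin l → ℝ) ∈ convexHull ℝ (T : Set (Fin l → ℝ)) := by
  have : Nontrivial (Fin l) := Fin.nontrivial_iff_two_le.mpr (by lia)
  obtain ⟨i, j, hij⟩ := exists_pair_ne (Fin l)
  have heven_compl (k : Fin l) : Even #({k}ᶜ : Finset (Fin l)) := by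
    rw [card_compl, card_singleton, Fintype.card_fin]
    exact hodd.tsub_odd odd_one
  refine ⟨univ.image ![spinWeight ∅, spinWeight {i, j}, spinWeight {i}ᶜ, spinWeight {j}ᶜ],
    ?_, card_image_le, ?_⟩
  · rw [coe_image, coe_univ, Set.image_univ, Set.range_subset_iff]
    intro m
    fin_cases m
    exacts [spinWeight_mem_halfSpinOrbit (card_empty ▸ Even.zero),
      spinWeight_mem_halfSpinOrbit (card_pair hij ▸ even_two),
      spinWeight_mem_halfSpinOrbit (heven_compl i), spinWeight_mem_halfSpinOrbit (heven_compl j)]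
  · rw [coe_image, coe_univ, Set.image_univ]
    refine zero_mem_convexHull_range_of_sum_eq_zero_s8 ?_
    rw [Fin.sum_univ_four]
    exact spinWeight_empty_add_pair_add_compl_add_compl hij

/-- For odd `ℓ ≥ 3`, the minimal cardinality of a finite subset `T ⊆ D(ℓ)` with
`0 ∈ Conv(T)` is exactly `4`. -/
theorem minCard_halfSpin (l : ℕ) (hl : 3 ≤ l) (hodd : Odd l) :
    IsLeast {k : ℕ | ∃ T : Finset (Fin l → ℝ), ↑T ⊆ halfSpinOrbit l ∧ T.card = k ∧
      (0 : Fin l → ℝ) ∈ convexHull ℝ (T : Set (Fin l → ℝ))} 4 := by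
  constructor
  · obtain ⟨T, hT, hcard, h0⟩ := exists_card_le_four_zero_mem_convexHull hl hodd
    exact ⟨T, hT, hcard.antisymm (four_le_card_of_subset_halfSpinOrbit hodd hT h0), h0⟩
  · rintro _ ⟨T, hT, rfl, h0⟩
    exact four_le_card_of_subset_halfSpinOrbit hodd hT h0
end

section
/- Let n ≥ 2, let λ ∈ ℝ^n satisfy λ_1 ≥ … ≥ λ_n and λ_1+…+λ_n = 0, and let r ≥ 1 be an integer. Then 0 ∈ C_r(O_λ) if and only if the zero matrix can be written as a sum A_1 + … + A_r with all A_i ∈ O_λ. -/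
/-- The `r`-th partial convex hull of a set `X`: the union of the convex hulls of all
`r`-tuples of points of `X`. -/
def partialConvexHull {E : Type*} [AddCommGroup E] [Module ℝ E]
    (r : ℕ) (X : Set E) : Set E :=
  {y | ∃ f : Fin r → E, (∀ i, f i ∈ X) ∧ y ∈ convexHull ℝ (Set.range f)}

/-- The coadjoint orbit `O_λ` of `SU(n)`: the set of `n × n` complex Hermitian matrices
of trace zero whose eigenvalues, listed with multiplicity, are the entries of `lam`. -/
def coadjointOrbit {n : ℕ} (lam : Fin n → ℝ) : Set (Matrix (Fin n) (Fin n) ℂ) :=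
  {A | A.trace = 0 ∧ ∃ hA : A.IsHermitian, ∃ σ : Equiv.Perm (Fin n),
      ∀ i, hA.eigenvalues (σ i) = lam i}

/-!
If `∑ i, p i • A i = 0` with weights `p` summing to one, then for every `s` the spectra
`p (i + s) • λ` are realized by Hermitian matrices with zero sum, and the sum over the cyclic
translations `s` of these spectra is `λ` in every slot. So it suffices that the families of
decreasing spectra realized by Hermitian matrices with zero sum are closed under addition. Matrices
with zero sum give flags of eigenspaces satisfying the moment map equation, hence the semistability
inequality, which is linear in the spectra. A configuration of flags whose coordinates are
algebraically independent over the countable field generated by the given solutions is semistable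
for all of them at once: automorphisms of `ℂ` fixing that field move it arbitrarily close to each of
the solutions, automorphisms preserve dimensions of intersections, and the semistability inequality
persists up to an error tending to zero. Hence this configuration is semistable for the sum of the
spectra. Conversely, by Kempf–Ness, semistability bounds a functional on positive definite matrices
from below, and a limit of near minimizers, rotated into unitary frames, solves the moment map
equation.
-/

open Matrix Filter Topology
open scoped ComplexOrder

section AlgebraicIndependence

open Cardinal

theorem countable_subfieldClosure {K : Type*} [Field K] {s : Set K} (hs : s.Countable) :
    Countable (Subfield.closure s) :=
  mk_le_aleph0_iff.1 <| (Subfield.cardinalMk_closure_le_max s).trans (max_le hs.le_aleph0 le_rfl)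

theorem det_ne_zero_of_algebraicIndependent {R A m : Type*} [CommRing R] [Nontrivial R] [CommRing A]
    [Algebra R A] [Fintype m] [DecidableEq m] {M : Matrix m m A}
    (hM : AlgebraicIndependent R fun p : m × m => M p.1 p.2) : M.det ≠ 0 := by
  rw [← Matrix.mvPolynomialX_mapMatrix_aeval R M, ← AlgHom.map_det]
  exact (map_ne_zero_iff _ hM).2 (Matrix.det_mvPolynomialX_ne_zero m R)

variable {F K ι : Type*} [Field F] [Countable F] [Field K] [IsAlgClosed K] [Uncountable K]
  [Algebra F K]

theorem uncountable_of_isTranscendenceBasis {s : Set K}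
    (hs : IsTranscendenceBasis F ((↑) : s → K)) : Uncountable s := by
  rw [← aleph0_lt_mk_iff, ← lift_id #s,
    ← IsAlgClosed.cardinal_eq_cardinal_transcendence_basis_of_aleph0_lt _ hs mk_le_aleph0
      aleph0_lt_mk, lift_id]
  exact aleph0_lt_mk

variable [Countable ι]

variable (F K ι) in
theorem exists_algebraicIndependent : ∃ x : ι → K, AlgebraicIndependent F x := by
  obtain ⟨s, hs⟩ := exists_isTranscendenceBasis F K
  have := uncountable_of_isTranscendenceBasis hs
  obtain ⟨f, hf⟩ := Countable.exists_injective_nat ι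
  exact ⟨_, hs.1.comp _ ((Infinite.natEmbedding s).injective.comp hf)⟩

theorem exists_ringEquiv_apply_eq_of_algebraicIndependent {x y : ι → K}
    (hx : AlgebraicIndependent F x) (hy : AlgebraicIndependent F y) :
    ∃ τ : K ≃+* K, ∀ k, τ (x k) = y k := by
  obtain ⟨s, hxs, hs⟩ := exists_isTranscendenceBasis_superset hx.to_subtype_range
  obtain ⟨t, hyt, ht⟩ := exists_isTranscendenceBasis_superset hy.to_subtype_range
  have := uncountable_of_isTranscendenceBasis hs
  obtain ⟨a, ha⟩ : ∃ a : ι ↪ s, ∀ k, (a k : K) = x k :=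
    ⟨⟨fun k => ⟨x k, hxs ⟨k, rfl⟩⟩, fun _ _ h => hx.injective (congrArg Subtype.val h)⟩,
      fun _ => rfl⟩
  obtain ⟨b, hb⟩ : ∃ b : ι ↪ t, ∀ k, (b k : K) = y k :=
    ⟨⟨fun k => ⟨y k, hyt ⟨k, rfl⟩⟩, fun _ _ h => hy.injective (congrArg Subtype.val h)⟩,
      fun _ => rfl⟩
  obtain ⟨e, he⟩ := extend_function_of_lt
    ((Equiv.ofInjective a a.injective).symm.toEmbedding.trans b)
    ((Set.countable_range a).le_aleph0.trans_lt aleph0_lt_mk) (Cardinal.eq.1 (hs.cardinalMk_eq ht))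
  have hea (k : ι) : e (a k) = b k := by simpa using he ⟨a k, k, rfl⟩
  have := IsAlgClosed.isAlgClosure_of_transcendence_basis _ hs
  have := IsAlgClosed.isAlgClosure_of_transcendence_basis _ ht
  let ρ := (hs.1.aevalEquiv.symm.trans
    ((MvPolynomial.renameEquiv F e).trans ht.1.aevalEquiv)).toRingEquiv
  refine ⟨IsAlgClosure.equivOfEquiv K K ρ, fun k => ?_⟩
  have hxk : x k = algebraMap (Algebra.adjoin F (Set.range ((↑) : s → K))) K
      (hs.1.aevalEquiv (MvPolynomial.X (a k))) := by
    simp [hs.1.algebraMap_aevalEquiv, ha]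
  rw [hxk, IsAlgClosure.equivOfEquiv_algebraMap]
  simp [ρ, hea, ht.1.algebraMap_aevalEquiv, hb]

theorem exists_ringEquiv_apply_eq_add_mul {x : ι → K} (hx : AlgebraicIndependent F x) (b : ι → F)
    {c : F} (hc : c ≠ 0) :
    ∃ τ : K ≃+* K, ∀ k, τ (x k) = algebraMap F K (b k) + algebraMap F K c * x k := by
  refine exists_ringEquiv_apply_eq_of_algebraicIndependent hx ?_
  have hlin (k : ι) :
      Transcendental F (Polynomial.C c * Polynomial.X + Polynomial.C (b k)) := by
    refine Polynomial.transcendental _ ?_ (mem_nonZeroDivisors_of_ne_zero ?_)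
    · rw [Polynomial.natDegree_linear hc]
      exact one_ne_zero
    · rwa [Polynomial.leadingCoeff_linear hc]
  simpa [add_comm] using hx.polynomial_aeval_of_transcendental hlin

end AlgebraicIndependence

section OrthogonalProjection

variable {m 𝕜 : Type*} [Fintype m] [DecidableEq m] [RCLike 𝕜]

/-- The matrix of the orthogonal projection of `𝕜 ^ m`, with its standard Hermitian inner product,
onto `V`. -/
noncomputable def orthogonalProjectionMatrix (V : Submodule 𝕜 (m → 𝕜)) : Matrix m m 𝕜 :=
  (toEuclideanCLM (n := m) (𝕜 := 𝕜)).symm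
    (V.map (WithLp.linearEquiv 2 𝕜 (m → 𝕜)).symm.toLinearMap).starProjection

variable (V : Submodule 𝕜 (m → 𝕜))

theorem isStarProjection_orthogonalProjectionMatrix :
    IsStarProjection (orthogonalProjectionMatrix V) :=
  isStarProjection_starProjection.map (toEuclideanCLM (n := m) (𝕜 := 𝕜)).symm

theorem orthogonalProjectionMatrix_mulVec (v : m → 𝕜) :
    orthogonalProjectionMatrix V *ᵥ v = WithLp.ofLp
      ((V.map (WithLp.linearEquiv 2 𝕜 (m → 𝕜)).symm.toLinearMap).starProjection
        (WithLp.toLp 2 v)) := by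
  rw [← ofLp_toEuclideanCLM, orthogonalProjectionMatrix, StarAlgEquiv.apply_symm_apply]

theorem orthogonalProjectionMatrix_mulVec_mem (v : m → 𝕜) :
    orthogonalProjectionMatrix V *ᵥ v ∈ V := by
  rw [orthogonalProjectionMatrix_mulVec]
  obtain ⟨w, hw, h⟩ := Submodule.mem_map.1 (Submodule.starProjection_apply_mem
    (V.map (WithLp.linearEquiv 2 𝕜 (m → 𝕜)).symm.toLinearMap) (WithLp.toLp 2 v))
  rw [← h]
  exact hw

variable {V}

theorem orthogonalProjectionMatrix_mulVec_of_mem {v : m → 𝕜} (hv : v ∈ V) :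
    orthogonalProjectionMatrix V *ᵥ v = v := by
  have h : WithLp.toLp 2 v ∈ V.map (WithLp.linearEquiv 2 𝕜 (m → 𝕜)).symm.toLinearMap := ⟨v, hv, rfl⟩
  rw [orthogonalProjectionMatrix_mulVec, Submodule.starProjection_eq_self_iff.2 h]

variable (V) in
theorem trace_orthogonalProjectionMatrix :
    (orthogonalProjectionMatrix V).trace = Module.finrank 𝕜 V := by
  rw [← trace_toLin'_eq]
  refine LinearMap.IsProj.trace (p := V) ⟨fun v => ?_, fun v hv => ?_⟩
  · exact orthogonalProjectionMatrix_mulVec_mem V v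
  · exact orthogonalProjectionMatrix_mulVec_of_mem hv

theorem mul_orthogonalProjectionMatrix_eq {P : Matrix m m 𝕜} (hP : ∀ v ∈ V, P *ᵥ v = v) :
    P * orthogonalProjectionMatrix V = orthogonalProjectionMatrix V := by
  refine ext_of_mulVec_single fun k => ?_
  rw [← mulVec_mulVec, hP _ (orthogonalProjectionMatrix_mulVec_mem V _)]

omit [DecidableEq m] in
theorem norm_apply_le_one_of_isStarProjection {P : Matrix m m 𝕜} (hP : IsStarProjection P)
    (a b : m) : ‖P a b‖ ≤ 1 := by
  classical
  set R : Matrix m m 𝕜 := 2 * P - 1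
  have hR : ‖R a b‖ ≤ 1 := entry_norm_bound_of_unitary hP.two_mul_sub_one_mem_unitary a b
  have hone : ‖(1 : Matrix m m 𝕜) a b‖ ≤ 1 := entry_norm_bound_of_unitary (one_mem _) a b
  have hsum : 2 * P a b = R a b + (1 : Matrix m m 𝕜) a b := by
    simp [R, two_mul]
  have hnorm := norm_add_le (R a b) ((1 : Matrix m m 𝕜) a b)
  rw [← hsum, norm_mul, RCLike.norm_ofNat] at hnorm
  linarith

omit [DecidableEq m] in
theorem re_trace_mul_nonneg {P Q : Matrix m m 𝕜} (hP : IsStarProjection P)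
    (hQ : IsStarProjection Q) : 0 ≤ RCLike.re (P * Q).trace := by
  have hPstar : Pᴴ = P := hP.isSelfAdjoint
  have hQstar : Qᴴ = Q := hQ.isSelfAdjoint
  have htrace : (P * Q).trace = ((Q * P)ᴴ * (Q * P)).trace :=
    calc (P * Q).trace = (P * P * Q * Q).trace := by
          rw [hP.isIdempotentElem.eq, mul_assoc P, hQ.isIdempotentElem.eq]
      _ = (P * (Q * Q) * P).trace := by
          rw [trace_mul_comm (P * (Q * Q))]
          simp only [mul_assoc]
      _ = ((Q * P)ᴴ * (Q * P)).trace := by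
          rw [conjTranspose_mul, hPstar, hQstar]
          simp only [mul_assoc]
  rw [htrace]
  exact (RCLike.nonneg_iff.1 (posSemidef_conjTranspose_mul_self (Q * P)).trace_nonneg).1

end OrthogonalProjection

section DiagonalIndicator

variable {k l m R : Type*} [Fintype m] [DecidableEq m] [NonAssocSemiring R]

theorem diagonal_indicator_mul_of_forall_notMem {s : Set m} {B : Matrix m k R}
    (hB : ∀ a ∉ s, ∀ b, B a b = 0) : diagonal (s.indicator (1 : m → R)) * B = B := by
  ext a b
  by_cases ha : a ∈ s
  · simp [ha]
  · simp [ha, hB a ha b]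

theorem submatrix_mul_submatrix_of_injective {p : Type*} [Fintype p] {e : p → m}
    (he : Function.Injective e) (A : Matrix k m R) (B : Matrix m l R) :
    A.submatrix id e * B.submatrix e id =
      A * diagonal ((Set.range e).indicator (1 : m → R)) * B := by
  ext a b
  rw [Matrix.mul_apply, Matrix.mul_apply]
  refine Fintype.sum_of_injective e he _ _ (fun c hc => ?_) fun c => ?_
  · simp [hc]
  · simp

end DiagonalIndicator

section Flag

variable {n : ℕ} {m R : Type*}

/-- The submatrix of `g` formed by its columns of index at most `j`. -/
def firstCols (g : Matrix m (Fin n) R) (j : Fin n) : Matrix m (Set.Iic j) R :=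
  g.submatrix id (↑)

theorem firstCols_mul {k : Type*} [Fintype k] [Mul R] [AddCommMonoid R] (A : Matrix m k R)
    (B : Matrix k (Fin n) R) (j : Fin n) : firstCols (A * B) j = A * firstCols B j := rfl

variable [CommRing R]

/-- The `j`-th step of the flag spanned by the columns of `g`, i.e. the span of the columns of index
at most `j`. -/
def flagSub (g : Matrix m (Fin n) R) (j : Fin n) : Submodule R (m → R) :=
  LinearMap.range (firstCols g j).mulVecLin

/-- The projection onto `flagSub g j` along the span of the remaining columns of `g`; it is the
orthogonal projection if `g` is unitary. -/
noncomputable def flagProj (g : Matrix (Fin n) (Fin n) R) (j : Fin n) : Matrix (Fin n) (Fin n) R :=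
  g * diagonal ((Set.Iic j).indicator (1 : Fin n → R)) * g⁻¹

theorem flagProj_mulVec_of_mem {g : Matrix (Fin n) (Fin n) R} (hg : IsUnit g.det) {j : Fin n}
    {v : Fin n → R} (hv : v ∈ flagSub g j) : flagProj g j *ᵥ v = v := by
  have hone : diagonal ((Set.Iic j).indicator (1 : Fin n → R)) *
      firstCols (1 : Matrix (Fin n) (Fin n) R) j = firstCols 1 j :=
    diagonal_indicator_mul_of_forall_notMem fun a ha b =>
      one_apply_ne (by rintro rfl; exact ha b.2)
  have hcols : flagProj g j * firstCols g j = firstCols g j := by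
    rw [flagProj, Matrix.mul_assoc, ← firstCols_mul, nonsing_inv_mul _ hg, Matrix.mul_assoc, hone,
      ← firstCols_mul, Matrix.mul_one]
  obtain ⟨w, rfl⟩ := hv
  rw [mulVecLin_apply, mulVec_mulVec, hcols]

section Unitary

variable {U : Matrix (Fin n) (Fin n) ℂ} (hU : U ∈ unitaryGroup (Fin n) ℂ) (j : Fin n)
include hU

theorem flagProj_of_mem_unitaryGroup :
    flagProj U j = U * diagonal ((Set.Iic j).indicator (1 : Fin n → ℂ)) * Uᴴ := by
  rw [flagProj, inv_eq_left_inv (mem_unitaryGroup_iff'.1 hU), star_eq_conjTranspose]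

theorem firstCols_mul_conjTranspose_self : firstCols U j * (firstCols U j)ᴴ = flagProj U j := by
  rw [flagProj_of_mem_unitaryGroup hU]
  exact (submatrix_mul_submatrix_of_injective Subtype.val_injective U Uᴴ).trans
    (by rw [Subtype.range_coe])

theorem conjTranspose_firstCols_mul_self : (firstCols U j)ᴴ * firstCols U j = 1 := by
  have hUU : (firstCols U j)ᴴ * firstCols U j = (Uᴴ * U).submatrix (↑) (↑) := rfl
  rw [hUU, ← star_eq_conjTranspose, mem_unitaryGroup_iff'.1 hU]
  exact submatrix_one _ Subtype.val_injective

theorem isStarProjection_flagProj : IsStarProjection (flagProj U j) := by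
  rw [← firstCols_mul_conjTranspose_self hU]
  refine ⟨?_, isHermitian_mul_conjTranspose_self _⟩
  rw [IsIdempotentElem, Matrix.mul_assoc, ← Matrix.mul_assoc (firstCols U j)ᴴ,
    conjTranspose_firstCols_mul_self hU, Matrix.one_mul]

theorem trace_flagProj : (flagProj U j).trace = Fintype.card (Set.Iic j) := by
  rw [← firstCols_mul_conjTranspose_self hU, trace_mul_comm, conjTranspose_firstCols_mul_self hU,
    trace_one]

theorem finrank_inf_flagSub_le {g : Matrix (Fin n) (Fin n) ℂ} (hg : IsUnit g.det)
    (V : Submodule ℂ (Fin n → ℂ)) :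
    (Module.finrank ℂ ↥(V ⊓ flagSub g j) : ℝ) ≤
      (orthogonalProjectionMatrix V * flagProj U j).trace.re +
        ∑ a, ∑ b, ‖flagProj g j a b - flagProj U j a b‖ := by
  set P := orthogonalProjectionMatrix V
  set R := orthogonalProjectionMatrix (V ⊓ flagSub g j)
  set Q := flagProj U j
  have hR : IsStarProjection R := isStarProjection_orthogonalProjectionMatrix _
  have hPR : P * R = R :=
    mul_orthogonalProjectionMatrix_eq fun v hv => orthogonalProjectionMatrix_mulVec_of_mem hv.1
  have hgR : flagProj g j * R = R :=
    mul_orthogonalProjectionMatrix_eq fun v hv => flagProj_mulVec_of_mem hg hv.2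
  have hmono : 0 ≤ ((P - R) * Q).trace.re :=
    re_trace_mul_nonneg (hR.sub_of_mul_eq_right (isStarProjection_orthogonalProjectionMatrix V) hPR)
      (isStarProjection_flagProj hU j)
  have herror : ((flagProj g j - Q) * R).trace.re ≤ ∑ a, ∑ b, ‖flagProj g j a b - Q a b‖ := by
    simp only [trace, diag_apply, Matrix.mul_apply, Matrix.sub_apply]
    refine (Complex.re_le_norm _).trans <| (norm_sum_le _ _).trans <| Finset.sum_le_sum fun a _ =>
      (norm_sum_le _ _).trans <| Finset.sum_le_sum fun b _ => ?_
    rw [norm_mul]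
    exact mul_le_of_le_one_right (norm_nonneg _) (norm_apply_le_one_of_isStarProjection hR b a)
  have htrace : (Module.finrank ℂ ↥(V ⊓ flagSub g j) : ℂ) =
      (P * Q).trace - ((P - R) * Q).trace + ((flagProj g j - Q) * R).trace := by
    rw [← trace_orthogonalProjectionMatrix, sub_mul, sub_mul, hgR, trace_sub, trace_sub,
      trace_mul_comm Q]
    ring
  have hre := congrArg Complex.re htrace
  rw [Complex.natCast_re, Complex.add_re, Complex.sub_re] at hre
  linarith

end Unitary

end Flag

section Twist

variable {m K : Type*} [Field K] (τ : K ≃+* K)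

/-- Entrywise application of a field automorphism to column vectors. -/
def semilinearTwist (m : Type*) : (m → K) →ₛₗ[(τ : K →+* K)] m → K where
  toFun v k := τ (v k)
  map_add' v w := funext fun k => map_add τ (v k) (w k)
  map_smul' a v := funext fun k => map_mul τ a (v k)

theorem semilinearTwist_injective : Function.Injective (semilinearTwist τ m) :=
  τ.injective.comp_left

theorem finrank_map_semilinearTwist (V : Submodule K (m → K)) :
    Module.finrank K (V.map (semilinearTwist τ m)) = Module.finrank K V := by
  have := RingHomInvPair.of_ringEquiv τ
  have := RingHomInvPair.of_ringEquiv_symm τ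
  exact congrArg Cardinal.toNat <| Eq.symm <| rank_eq_of_equiv_equiv τ
    (V.equivMapOfInjective (σ₂₁ := (τ.symm : K →+* K)) (semilinearTwist τ m)
      (semilinearTwist_injective τ)).toAddEquiv τ.bijective
    fun a v => Subtype.ext (map_smulₛₗ (semilinearTwist τ m) a (v : m → K))

theorem map_semilinearTwist_flagSub {n : ℕ} (g : Matrix m (Fin n) K) (j : Fin n) :
    (flagSub g j).map (semilinearTwist τ m) = flagSub (g.map τ) j := by
  have hcomm (w : Set.Iic j → K) : semilinearTwist τ m (firstCols g j *ᵥ w) =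
      firstCols (g.map τ) j *ᵥ semilinearTwist τ _ w :=
    funext (RingHom.map_mulVec (τ : K →+* K) (firstCols g j) w)
  ext v
  constructor
  · rintro ⟨_, ⟨w, rfl⟩, rfl⟩
    exact ⟨semilinearTwist τ _ w, (hcomm w).symm⟩
  · rintro ⟨w, rfl⟩
    refine ⟨_, ⟨semilinearTwist τ.symm _ w, rfl⟩, (hcomm _).trans ?_⟩
    congr 1
    exact funext fun k => τ.apply_symm_apply (w k)

theorem finrank_map_semilinearTwist_inf_flagSub {n : ℕ} (V : Submodule K (m → K))
    (g : Matrix m (Fin n) K) (j : Fin n) :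
    Module.finrank K ↥(V.map (semilinearTwist τ m) ⊓ flagSub (g.map τ) j) =
      Module.finrank K ↥(V ⊓ flagSub g j) := by
  rw [← map_semilinearTwist_flagSub, ← Submodule.map_inf _ (semilinearTwist_injective τ),
    finrank_map_semilinearTwist]

end Twist

section Semistability

variable {n : ℕ} {ι : Type*} [Fintype ι]

/-- The Hermitian matrices `∑ j, c i j • flagProj (U i) j`, which for unitary `U i` have arbitrary
prescribed spectra up to a shift, sum to the scalar matrix `K`. -/
def IsBalanced (c : ι → Fin n → ℝ) (K : ℝ) (U : ι → Matrix (Fin n) (Fin n) ℂ) : Prop :=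
  ∑ i, ∑ j, c i j • flagProj (U i) j = K • (1 : Matrix (Fin n) (Fin n) ℂ)

/-- Semistability, of slope `K`, of the configuration of flags spanned by the columns of the `x i`,
the steps of the flags being weighted by `c`. -/
def IsSemistable (c : ι → Fin n → ℝ) (K : ℝ) (x : ι → Matrix (Fin n) (Fin n) ℂ) : Prop :=
  ∀ V : Submodule ℂ (Fin n → ℂ),
    ∑ i, ∑ j, c i j * Module.finrank ℂ ↥(V ⊓ flagSub (x i) j) ≤ K * Module.finrank ℂ V

theorem IsSemistable.sum {σ : Type*} [Fintype σ] {c : σ → ι → Fin n → ℝ} {K : σ → ℝ}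
    {x : ι → Matrix (Fin n) (Fin n) ℂ} (h : ∀ s, IsSemistable (c s) (K s) x) :
    IsSemistable (∑ s, c s) (∑ s, K s) x := by
  intro V
  rw [Finset.sum_mul]
  refine le_of_eq_of_le ?_ (Finset.sum_le_sum fun s _ => h s V)
  simp only [Finset.sum_apply, Finset.sum_mul]
  exact (Finset.sum_congr rfl fun i _ => Finset.sum_comm).trans Finset.sum_comm

variable {c : ι → Fin n → ℝ} {K : ℝ} {U x : ι → Matrix (Fin n) (Fin n) ℂ}

theorem IsBalanced.sum_re_trace_mul (h : IsBalanced c K U) (P : Matrix (Fin n) (Fin n) ℂ) :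
    ∑ i, ∑ j, c i j * (P * flagProj (U i) j).trace.re = K * P.trace.re := by
  have htrace := congrArg (fun M : Matrix (Fin n) (Fin n) ℂ => (P * M).trace.re) h
  simpa only [Finset.mul_sum, Matrix.mul_smul, trace_sum, trace_smul, Complex.re_sum,
    Complex.smul_re, smul_eq_mul, mul_one] using htrace

theorem IsBalanced.sum_finrank_le (h : IsBalanced c K U) (hc : ∀ i j, 0 ≤ c i j)
    (hU : ∀ i, U i ∈ unitaryGroup (Fin n) ℂ) {g : ι → Matrix (Fin n) (Fin n) ℂ}
    (hg : ∀ i, IsUnit (g i).det) (V : Submodule ℂ (Fin n → ℂ)) :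
    ∑ i, ∑ j, c i j * Module.finrank ℂ ↥(V ⊓ flagSub (g i) j) ≤ K * Module.finrank ℂ V +
      ∑ i, ∑ j, c i j * ∑ a, ∑ b, ‖flagProj (g i) j a b - flagProj (U i) j a b‖ := by
  have hbal := h.sum_re_trace_mul (orthogonalProjectionMatrix V)
  rw [trace_orthogonalProjectionMatrix, Complex.natCast_re] at hbal
  simp_rw [← hbal, ← Finset.sum_add_distrib, ← mul_add]
  gcongr with i _ j _
  · exact hc i j
  · exact finrank_inf_flagSub_le (hU i) j (hg i) V

theorem tendsto_flagProj {α : Type*} {l : Filter α} {U : Matrix (Fin n) (Fin n) ℂ}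
    {g : α → Matrix (Fin n) (Fin n) ℂ} (hU : IsUnit U.det) (hg : Tendsto g l (𝓝 U)) (j : Fin n) :
    Tendsto (fun a => flagProj (g a) j) l (𝓝 (flagProj U j)) := by
  have hinv : Tendsto (fun a => (g a)⁻¹) l (𝓝 U⁻¹) := by
    simp only [Matrix.inv_def, Ring.inverse_eq_inv']
    exact (((continuous_id.matrix_det).tendsto U).comp hg |>.inv₀ hU.ne_zero).smul
      (((continuous_id.matrix_adjugate).tendsto U).comp hg)
  exact (hg.mul_const _).mul hinv

theorem IsBalanced.isSemistable_of_tendsto_map (h : IsBalanced c K U) (hc : ∀ i j, 0 ≤ c i j)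
    (hU : ∀ i, U i ∈ unitaryGroup (Fin n) ℂ) (hx : ∀ i, IsUnit (x i).det) {τ : ℕ → ℂ ≃+* ℂ}
    (hτ : ∀ i, Tendsto (fun m => (x i).map (τ m)) atTop (𝓝 (U i))) : IsSemistable c K x := by
  intro V
  have hdet (i : ι) : IsUnit (U i).det := UnitaryGroup.det_isUnit ⟨U i, hU i⟩
  have herror : Tendsto (fun m => K * Module.finrank ℂ V + ∑ i, ∑ j, c i j * ∑ a, ∑ b,
      ‖flagProj ((x i).map (τ m)) j a b - flagProj (U i) j a b‖) atTop
      (𝓝 (K * Module.finrank ℂ V + ∑ i, ∑ j, c i j * ∑ a : Fin n, ∑ b : Fin n, 0)) := by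
    refine tendsto_const_nhds.add <| tendsto_finsetSum _ fun i _ => tendsto_finsetSum _ fun j _ =>
      Tendsto.const_mul _ <| tendsto_finsetSum _ fun a _ => tendsto_finsetSum _ fun b _ => ?_
    exact tendsto_iff_norm_sub_tendsto_zero.1 <|
      tendsto_pi_nhds.1 (tendsto_pi_nhds.1 (tendsto_flagProj (hdet i) (hτ i) j) a) b
  simp only [Finset.sum_const_zero, mul_zero, add_zero] at herror
  refine ge_of_tendsto' herror fun m => ?_
  have hg (i : ι) : IsUnit ((x i).map (τ m)).det := by
    have := (hx i).map (τ m)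
    rwa [RingEquiv.map_det] at this
  have hbound := h.sum_finrank_le hc hU hg (V.map (semilinearTwist (τ m) (Fin n)))
  simpa only [finrank_map_semilinearTwist_inf_flagSub, finrank_map_semilinearTwist] using hbound

theorem exists_isSemistable {σ : Type*} [Countable σ] {c : σ → ι → Fin n → ℝ}
    (hc : ∀ s i j, 0 ≤ c s i j) {K : σ → ℝ} {U : σ → ι → Matrix (Fin n) (Fin n) ℂ}
    (hU : ∀ s i, U s i ∈ unitaryGroup (Fin n) ℂ) (h : ∀ s, IsBalanced (c s) (K s) (U s)) :
    ∃ x : ι → Matrix (Fin n) (Fin n) ℂ,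
      (∀ i, IsUnit (x i).det) ∧ ∀ s, IsSemistable (c s) (K s) x := by
  let F := Subfield.closure (Set.range fun q : σ × ι × Fin n × Fin n => U q.1 q.2.1 q.2.2.1 q.2.2.2)
  have : Countable F := countable_subfieldClosure (Set.countable_range _)
  have : Uncountable ℂ := ⟨fun h => not_countable_complex Set.countable_univ⟩
  obtain ⟨y, hy⟩ := exists_algebraicIndependent F ℂ (ι × Fin n × Fin n)
  let x : ι → Matrix (Fin n) (Fin n) ℂ := fun i => of fun a b => y (i, a, b)
  have hx (i : ι) : IsUnit (x i).det := isUnit_iff_ne_zero.2 <|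
    det_ne_zero_of_algebraicIndependent (R := F) (hy.comp (Prod.mk i) (Prod.mk_right_injective i))
  refine ⟨x, hx, fun s => ?_⟩
  let b (q : ι × Fin n × Fin n) : F := ⟨U s q.1 q.2.1 q.2.2, Subfield.subset_closure ⟨(s, q), rfl⟩⟩
  have hne (m : ℕ) : (1 / ((m : F) + 1)) ≠ 0 := one_div_ne_zero (Nat.cast_add_one_ne_zero m)
  choose τ hτ using fun m => exists_ringEquiv_apply_eq_add_mul hy b (hne m)
  refine (h s).isSemistable_of_tendsto_map (hc s) (hU s) hx (τ := τ) fun i => ?_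
  refine tendsto_pi_nhds.2 fun a => tendsto_pi_nhds.2 fun k => ?_
  have hlim := ((tendsto_one_div_add_atTop_nhds_zero_nat (𝕜 := ℂ)).mul_const
    (y (i, a, k))).const_add (U s i a k)
  rw [zero_mul, add_zero] at hlim
  refine hlim.congr fun m => ?_
  refine .trans ?_ (hτ m (i, a, k)).symm
  simp only [map_div₀, map_one, map_add, map_natCast]
  rfl

end Semistability

section Minors

variable {m J : Type*} [Fintype J] [DecidableEq J]

section RCLike

variable {𝕜 : Type*} [RCLike 𝕜]

theorem one_le_norm_det_one_add {A : Matrix J J 𝕜} (hA : A.PosSemidef) : 1 ≤ ‖(1 + A).det‖ := by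
  have hdet : ‖(1 + A).det‖ = ∏ k, ‖(-1 : 𝕜) - hA.1.eigenvalues k‖ := by
    have hneg : 1 + A = -(scalar J (-1) - A) := by
      rw [map_neg, map_one]
      abel
    rw [hneg, det_neg, ← eval_charpoly, hA.1.charpoly_eq, norm_mul, norm_pow, norm_neg, norm_one,
      one_pow, one_mul, Polynomial.eval_prod, norm_prod]
    simp only [Polynomial.eval_sub, Polynomial.eval_X, Polynomial.eval_C]
  rw [hdet]
  refine Finset.one_le_prod fun k _ => ?_
  have hreal : -((-1 : 𝕜) - hA.1.eigenvalues k) = ((1 + hA.1.eigenvalues k : ℝ) : 𝕜) := by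
    push_cast
    ring
  rw [← norm_neg, hreal, RCLike.norm_ofReal]
  exact le_abs.2 (.inl (le_add_of_nonneg_right (hA.eigenvalues_nonneg k)))

theorem norm_det_sq_le_norm_det_add (N : Matrix J J 𝕜) {B : Matrix J J 𝕜} (hB : B.PosSemidef) :
    ‖N.det‖ ^ 2 ≤ ‖(Nᴴ * N + B).det‖ := by
  by_cases hN : IsUnit N.det
  · have hfactor : Nᴴ * N + B = Nᴴ * (1 + N⁻¹ᴴ * B * N⁻¹) * N := by
      rw [Matrix.mul_add, Matrix.add_mul, Matrix.mul_one, Matrix.mul_assoc N⁻¹ᴴ,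
        Matrix.mul_assoc Nᴴ, Matrix.mul_assoc N⁻¹ᴴ, nonsing_inv_mul_cancel_right _ _ hN,
        ← Matrix.mul_assoc Nᴴ, ← conjTranspose_mul, nonsing_inv_mul _ hN, conjTranspose_one,
        Matrix.one_mul]
    have hone := one_le_norm_det_one_add (hB.conjTranspose_mul_mul_same N⁻¹)
    rw [hfactor, det_mul, det_mul, det_conjTranspose, norm_mul, norm_mul, norm_star]
    nlinarith [sq_nonneg ‖N.det‖]
  · rw [isUnit_iff_ne_zero, not_not] at hN
    simp [hN]

theorem norm_det_submatrix_sq_le [Fintype m] (Z : Matrix m J 𝕜) (e : J → m) :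
    ‖(Z.submatrix e id).det‖ ^ 2 ≤ ‖(Zᴴ * Z).det‖ := by
  classical
  by_cases he : Function.Injective e
  · set D : Matrix m m 𝕜 := diagonal ((Set.range e).indicator (1 : m → 𝕜))
    have hsplit : Zᴴ * Z = (Z.submatrix e id)ᴴ * Z.submatrix e id + Zᴴ * (1 - D) * Z := by
      rw [conjTranspose_submatrix, submatrix_mul_submatrix_of_injective he, Matrix.mul_sub,
        Matrix.sub_mul, Matrix.mul_one, add_sub_cancel]
    have hD : (1 - D).PosSemidef := by
      rw [← diagonal_one, diagonal_sub, posSemidef_diagonal_iff]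
      intro l
      by_cases hl : l ∈ Set.range e <;> simp [hl]
    rw [hsplit]
    exact norm_det_sq_le_norm_det_add _ (hD.conjTranspose_mul_mul_same Z)
  · obtain ⟨a, b, hab, hne⟩ := Function.not_injective_iff.1 he
    rw [det_zero_of_row_eq hne (by ext k; simp [hab])]
    simp

end RCLike

theorem exists_det_submatrix_ne_zero {R : Type*} [CommRing R] [Fintype m] {A : Matrix J m R}
    {Z : Matrix m J R} (h : (A * Z).det ≠ 0) : ∃ e : J → m, (Z.submatrix e id).det ≠ 0 := by
  contrapose! h
  have hrows : A * Z = fun a => ∑ l, A a l • Z l := by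
    ext a b
    simp [Matrix.mul_apply]
  rw [det, hrows, ← AlternatingMap.coe_multilinearMap, MultilinearMap.map_sum]
  refine Finset.sum_eq_zero fun e _ => ?_
  rw [MultilinearMap.map_smul_univ]
  exact smul_eq_zero_of_right _ (h e)

section Field

variable {K : Type*} [Field K]

theorem det_submatrix_update (Z : Matrix m J K) {e : J → m}
    (he : IsUnit (Z.submatrix e id).det) (a : J) (l : m) :
    (Z.submatrix (Function.update e a l) id).det =
      (Z.submatrix e id).det * (Z * (Z.submatrix e id)⁻¹) l a := by
  have hrow : Z.submatrix (Function.update e a l) id = (Z.submatrix e id).updateRow a (Z l) := by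
    ext b c
    by_cases hb : b = a
    · subst hb; simp
    · simp [hb]
  rw [hrow, ← cramer_transpose_apply, ← det_smul_inv_vecMul_eq_cramer_transpose _ _ he]
  rfl

variable [LinearOrder m] [Fintype m]

theorem exists_minimal_det_submatrix_ne_zero {A : Matrix J m K} {Z : Matrix m J K}
    (h : (A * Z).det ≠ 0) : ∃ e : J → m, (Z.submatrix e id).det ≠ 0 ∧
      ∀ l a, (Z * (Z.submatrix e id)⁻¹) l a ≠ 0 → e a ≤ l := by
  obtain ⟨e, he⟩ := (Set.toFinite {e : J → m | (Z.submatrix e id).det ≠ 0}).exists_minimal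
    (exists_det_submatrix_ne_zero h)
  refine ⟨e, he.prop, fun l a hla => ?_⟩
  by_contra! hlt
  refine he.not_lt (y := Function.update e a l) ?_ (update_lt_self_iff.2 hlt)
  rw [Set.mem_ofPred_eq, det_submatrix_update Z (isUnit_iff_ne_zero.2 he.prop)]
  exact mul_ne_zero he.prop hla

theorem exists_det_submatrix_ne_zero_forall_card_le {k : Type*} [Fintype k] {A : Matrix J m K}
    {B : Matrix m k K} {Y : Matrix k J K} (h : (A * (B * Y)).det ≠ 0) :
    ∃ e : J → m, ((B * Y).submatrix e id).det ≠ 0 ∧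
      ∀ t, Fintype.card {a // t < e a} ≤ Module.finrank K ↥(
        LinearMap.ker (B.submatrix ((↑) : Set.Iic t → m) id).mulVecLin ⊓
          LinearMap.range Y.mulVecLin) := by
  obtain ⟨e, he, hle⟩ := exists_minimal_det_submatrix_ne_zero h
  refine ⟨e, he, fun t => ?_⟩
  set N := (B * Y).submatrix e id
  set C := B * Y * N⁻¹
  have hC : C = B * (Y * N⁻¹) := Matrix.mul_assoc B Y N⁻¹
  let v (a : J) : k → K := (Y * N⁻¹).col a
  have hCe : C.submatrix e id = 1 := mul_nonsing_inv N (isUnit_iff_ne_zero.2 he)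
  have hmem (a : {a // t < e a}) : v a ∈
      LinearMap.ker (B.submatrix ((↑) : Set.Iic t → m) id).mulVecLin ⊓
        LinearMap.range Y.mulVecLin := by
    refine ⟨funext fun l => ?_, ⟨N⁻¹.col a, rfl⟩⟩
    by_contra hne
    have hCla : C l a ≠ 0 := by
      rw [hC]
      exact hne
    exact absurd (hle l a hCla) (l.2.trans_lt a.2).not_ge
  have hindep : LinearIndependent K fun a : {a // t < e a} => (⟨v a, hmem a⟩ : ↥(
      LinearMap.ker (B.submatrix ((↑) : Set.Iic t → m) id).mulVecLin ⊓
        LinearMap.range Y.mulVecLin)) := by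
    refine .of_comp ((B.submatrix e id).mulVecLin ∘ₗ Submodule.subtype _) ?_
    have hsingle (a : J) : B.submatrix e id *ᵥ v a = Pi.single a 1 := by
      rw [hC] at hCe
      exact (congrArg (·.col a) hCe).trans
        ((mulVec_single_one 1 a).symm.trans (one_mulVec _))
    simpa only [Function.comp_def, LinearMap.comp_apply, Submodule.subtype_apply, mulVecLin_apply,
      hsingle] using (Pi.linearIndependent_single_one J K).comp _ Subtype.val_injective
  exact hindep.fintype_card_le_finrank

end Field

end Minors

section Antitone

variable {n : ℕ} {R : Type*} [Ring R] [PartialOrder R] [IsOrderedRing R] {t : Fin n → R}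

theorem exists_eq_sum_indicator_Iic_sub_of_antitone (ht : Antitone t) :
    ∃ (c : Fin n → R) (κ : R), (∀ j, 0 ≤ c j) ∧
      t = ∑ j, c j • (Set.Iic j).indicator (1 : Fin n → R) - κ • 1 := by
  induction n with
  | zero => exact ⟨0, 0, fun j => j.elim0, Subsingleton.elim _ _⟩
  | succ n ih =>
    obtain _ | n := n
    · exact ⟨0, -t 0, fun _ => le_rfl, funext fun k => by simp [Fin.fin_one_eq_zero k]⟩
    obtain ⟨c, κ, hc, htail⟩ := ih (t := t ∘ Fin.succ)
      (ht.comp_monotone Fin.strictMono_succ.monotone)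
    have htail (k : Fin (n + 1)) : t k.succ = ∑ j, (if k ≤ j then c j else 0) - κ := by
      simpa [Set.indicator_apply] using congrFun htail k
    refine ⟨Fin.cons (t 0 - t 1) c, κ, Fin.cases (sub_nonneg.2 (ht (Fin.zero_le _))) hc,
      funext (Fin.cases ?_ fun k => ?_)⟩
    · have hone := htail 0
      simp only [Fin.succ_zero_eq_one, Fin.zero_le, if_true] at hone
      simp [Fin.sum_univ_succ (n := n + 1), hone]
      abel
    · simp [Fin.sum_univ_succ (n := n + 1), Set.indicator_apply, htail]

theorem map_nonneg_of_antitone {L : (Fin n → R) →ₗ[R] R} (hone : L 1 = 0)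
    (hindicator : ∀ k, 0 ≤ L ((Set.Iic k).indicator 1)) (ht : Antitone t) : 0 ≤ L t := by
  obtain ⟨c, κ, hc, rfl⟩ := exists_eq_sum_indicator_Iic_sub_of_antitone ht
  rw [map_sub, map_sum, map_smul, hone, smul_zero, sub_zero]
  refine Finset.sum_nonneg fun j _ => ?_
  rw [map_smul]
  exact mul_nonneg (hc j) (hindicator j)

end Antitone

theorem sum_indicator_Iic_apply {J m R : Type*} [Fintype J] [LinearOrder m] [Ring R] (e : J → m)
    (k : m) : ∑ a, (Set.Iic k).indicator (1 : m → R) (e a) =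
      Fintype.card J - Fintype.card {a // k < e a} := by
  rw [eq_sub_iff_add_eq, Fintype.card_subtype, ← Finset.sum_boole, ← Finset.sum_add_distrib,
    ← Finset.card_univ, Finset.cast_card]
  refine Finset.sum_congr rfl fun a _ => ?_
  rcases le_or_gt (e a) k with ha | ha
  · simp [ha, ha.not_gt]
  · simp [ha, ha.not_ge]

section RowSelection

variable {n : ℕ} {ι : Type*} [Fintype ι] {c : ι → Fin n → ℝ} {K : ℝ}
  {x : ι → Matrix (Fin n) (Fin n) ℂ} {W : Matrix (Fin n) (Fin n) ℂ}

theorem finrank_ker_conjTranspose_firstCols (hW : W ∈ unitaryGroup (Fin n) ℂ) (k : Fin n) :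
    Module.finrank ℂ ↥(LinearMap.ker ((firstCols W k)ᴴ).mulVecLin) =
      n - (Fintype.card (Set.Iic k) : ℝ) := by
  have hsurj : Function.Surjective ((firstCols W k)ᴴ).mulVecLin := fun v =>
    ⟨firstCols W k *ᵥ v, by
      rw [mulVecLin_apply, mulVec_mulVec, conjTranspose_firstCols_mul_self hW, one_mulVec]⟩
  have hrank := LinearMap.finrank_range_add_finrank_ker ((firstCols W k)ᴴ).mulVecLin
  rw [LinearMap.range_eq_top.2 hsurj, finrank_top, Module.finrank_pi, Module.finrank_pi,
    Fintype.card_fin] at hrank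
  rw [eq_sub_iff_add_eq']
  exact_mod_cast hrank

theorem posDef_conjTranspose_firstCols_mul_mul {H g : Matrix (Fin n) (Fin n) ℂ} (hH : H.PosDef)
    (hg : IsUnit g.det) (j : Fin n) : ((firstCols g j)ᴴ * H * firstCols g j).PosDef :=
  (hH.conjTranspose_mul_mul_same
    (mulVec_injective_of_isUnit ((isUnit_iff_isUnit_det g).2 hg))).submatrix
    Subtype.val_injective

theorem IsSemistable.mul_card_le_sum (h : IsSemistable c K x)
    (hcard : ∑ i, ∑ j, c i j * Fintype.card (Set.Iic j) = K * n)
    (hW : W ∈ unitaryGroup (Fin n) ℂ) (k : Fin n) :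
    K * Fintype.card (Set.Iic k) ≤ ∑ i, ∑ j, c i j * ((Fintype.card (Set.Iic j) : ℝ) -
      Module.finrank ℂ ↥(LinearMap.ker ((firstCols W k)ᴴ).mulVecLin ⊓ flagSub (x i) j)) := by
  have hker := h (LinearMap.ker ((firstCols W k)ᴴ).mulVecLin)
  rw [finrank_ker_conjTranspose_firstCols hW] at hker
  simp only [mul_sub, Finset.sum_sub_distrib]
  linarith

theorem exists_rows_forall_antitone_le (hc : ∀ i j, 0 ≤ c i j) (hx : ∀ i, IsUnit (x i).det)
    (hcard : ∑ i, ∑ j, c i j * Fintype.card (Set.Iic j) = K * n) (h : IsSemistable c K x)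
    (hW : W ∈ unitaryGroup (Fin n) ℂ) :
    ∃ e : ∀ (_ : ι) (j : Fin n), Set.Iic j → Fin n,
      (∀ i j, ((Wᴴ * firstCols (x i) j).submatrix (e i j) id).det ≠ 0) ∧
      ∀ t : Fin n → ℝ, Antitone t → K * ∑ k, t k ≤ ∑ i, ∑ j, c i j * ∑ a, t (e i j a) := by
  have hdet (i : ι) (j : Fin n) :
      (((firstCols (x i) j)ᴴ * W) * (Wᴴ * firstCols (x i) j)).det ≠ 0 := by
    rw [Matrix.mul_assoc, ← Matrix.mul_assoc W, ← star_eq_conjTranspose W,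
      mem_unitaryGroup_iff.1 hW, ← Matrix.mul_assoc]
    exact (posDef_conjTranspose_firstCols_mul_mul PosDef.one (hx i) j).det_pos.ne'
  choose e he hle using fun i j => exists_det_submatrix_ne_zero_forall_card_le (hdet i j)
  refine ⟨e, he, fun t ht => ?_⟩
  let L : (Fin n → ℝ) →ₗ[ℝ] ℝ :=
    ∑ i, ∑ j, c i j • ∑ a, LinearMap.proj (e i j a) - K • ∑ k, LinearMap.proj k
  have hL (t : Fin n → ℝ) : L t = ∑ i, ∑ j, c i j * ∑ a, t (e i j a) - K * ∑ k, t k := by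
    simp [L, LinearMap.sum_apply]
  rw [← sub_nonneg, ← hL]
  refine map_nonneg_of_antitone ?_ (fun k => ?_) ht
  · simp [hL, ← hcard]
  · have hIic : ∑ l, (Set.Iic k).indicator (1 : Fin n → ℝ) l = Fintype.card (Set.Iic k) := by
      simp only [Set.indicator_apply, Pi.one_apply, Finset.sum_boole, ← Fintype.card_subtype]
    rw [hL, hIic, sub_nonneg]
    refine (h.mul_card_le_sum hcard hW k).trans <| Finset.sum_le_sum fun i _ =>
      Finset.sum_le_sum fun j _ => mul_le_mul_of_nonneg_left ?_ (hc i j)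
    rw [sum_indicator_Iic_apply]
    exact sub_le_sub_left (Nat.cast_le.2 (hle i j k)) _

end RowSelection

section SpectralTheorem

variable {n : ℕ} {A : Matrix (Fin n) (Fin n) ℂ}

theorem exists_eq_conj_diagonal_eigenvalues_comp (hA : A.IsHermitian) (σ : Equiv.Perm (Fin n)) :
    ∃ W ∈ unitaryGroup (Fin n) ℂ, A = W * diagonal (fun k => (hA.eigenvalues (σ k) : ℂ)) * Wᴴ := by
  have hspec := hA.spectral_theorem
  rw [Unitary.conjStarAlgAut_apply] at hspec
  refine ⟨(hA.eigenvectorUnitary : Matrix (Fin n) (Fin n) ℂ).submatrix id σ, ?_, ?_⟩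
  · rw [mem_unitaryGroup_iff, star_eq_conjTranspose, conjTranspose_submatrix, submatrix_mul_equiv,
      ← star_eq_conjTranspose, mem_unitaryGroup_iff.1 hA.eigenvectorUnitary.2, submatrix_id_id]
  · have hperm : diagonal (fun k => (hA.eigenvalues (σ k) : ℂ)) =
        (diagonal (RCLike.ofReal ∘ hA.eigenvalues) : Matrix (Fin n) (Fin n) ℂ).submatrix σ σ :=
      (submatrix_diagonal_equiv (RCLike.ofReal ∘ hA.eigenvalues) σ).symm
    rw [hperm, conjTranspose_submatrix, ← star_eq_conjTranspose, submatrix_mul_equiv,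
      submatrix_mul_equiv, submatrix_id_id]
    exact hspec

theorem exists_antitone_eq_conj_diagonal (hA : A.IsHermitian) :
    ∃ W ∈ unitaryGroup (Fin n) ℂ, ∃ θ : Fin n → ℝ, Antitone θ ∧
      A = W * diagonal (fun k => (θ k : ℂ)) * Wᴴ := by
  obtain ⟨W, hW, hAW⟩ := exists_eq_conj_diagonal_eigenvalues_comp hA
    (Tuple.sort fun k => -hA.eigenvalues k)
  have hmono := Tuple.monotone_sort fun k => -hA.eigenvalues k
  exact ⟨W, hW, _, fun _ _ hab => neg_le_neg_iff.1 (hmono hab), hAW⟩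

end SpectralTheorem

theorem isCompact_unitaryGroup {n 𝕜 : Type*} [Fintype n] [DecidableEq n] [RCLike 𝕜] :
    IsCompact (unitaryGroup n 𝕜 : Set (Matrix n n 𝕜)) := by
  have hball : IsCompact
      {U : n → n → 𝕜 | ∀ a, U a ∈ {v : n → 𝕜 | ∀ b, v b ∈ Metric.closedBall 0 1}} :=
    isCompact_pi_infinite fun _ => isCompact_pi_infinite fun _ => isCompact_closedBall _ _
  have hclosed : IsClosed (unitaryGroup n 𝕜 : Set (Matrix n n 𝕜)) := isClosed_unitary
  exact hball.of_isClosed_subset (X := Matrix n n 𝕜) hclosed fun U hU a b =>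
    mem_closedBall_zero_iff.2 (entry_norm_bound_of_unitary hU a b)

theorem exists_unitary_conjTranspose_mul_apply_eq_zero {n : ℕ} {𝕜 : Type*} [RCLike 𝕜]
    (M : Matrix (Fin n) (Fin n) 𝕜) :
    ∃ U ∈ unitaryGroup (Fin n) 𝕜, ∀ i j, j < i → (Uᴴ * M) i j = 0 := by
  have hn : Module.finrank 𝕜 (EuclideanSpace 𝕜 (Fin n)) = Fintype.card (Fin n) :=
    finrank_euclideanSpace
  let v (j : Fin n) : EuclideanSpace 𝕜 (Fin n) := WithLp.toLp 2 (M.col j)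
  let b := InnerProductSpace.gramSchmidtOrthonormalBasis hn v
  refine ⟨(EuclideanSpace.basisFun (Fin n) 𝕜).toBasis.toMatrix b,
    (EuclideanSpace.basisFun _ _).toMatrix_orthonormalBasis_mem_unitary b, fun i j hij => ?_⟩
  refine .trans ?_ (InnerProductSpace.gramSchmidtOrthonormalBasis_inv_triangular hn v hij)
  simp [v, Matrix.mul_apply, Module.Basis.toMatrix_apply, PiLp.inner_apply, b, mul_comm]

theorem exists_unitary_forall_flagProj_mul_firstCols {n : ℕ} (M : Matrix (Fin n) (Fin n) ℂ) :
    ∃ U ∈ unitaryGroup (Fin n) ℂ, ∀ j, flagProj U j * firstCols M j = firstCols M j := by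
  obtain ⟨U, hU, htriangular⟩ := exists_unitary_conjTranspose_mul_apply_eq_zero M
  refine ⟨U, hU, fun j => ?_⟩
  have hrows : diagonal ((Set.Iic j).indicator (1 : Fin n → ℂ)) * firstCols (Uᴴ * M) j =
      firstCols (Uᴴ * M) j := diagonal_indicator_mul_of_forall_notMem fun i hi k =>
    htriangular i k (k.2.trans_lt (not_le.1 hi))
  rw [flagProj_of_mem_unitaryGroup hU, Matrix.mul_assoc, ← firstCols_mul, Matrix.mul_assoc, hrows,
    ← firstCols_mul, ← Matrix.mul_assoc, ← star_eq_conjTranspose, mem_unitaryGroup_iff.1 hU,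
    Matrix.one_mul]

section KempfNess

variable {n : ℕ} {ι : Type*} [Fintype ι]

/-- The logarithm of the Gram determinant, for the Hermitian form `H`, of the columns of `g` of
index at most `j`. -/
noncomputable def logGramDet (g H : Matrix (Fin n) (Fin n) ℂ) (j : Fin n) : ℝ :=
  Real.log ‖((firstCols g j)ᴴ * H * firstCols g j).det‖

/-- The Kempf–Ness functional, on positive definite matrices `H`, of the flags spanned by the
columns of the `x i`. It is bounded below when the flags are semistable, and its minimizers solve
the moment map equation `IsBalanced`. -/
noncomputable def kempfNess (c : ι → Fin n → ℝ) (K : ℝ) (x : ι → Matrix (Fin n) (Fin n) ℂ)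
    (H : Matrix (Fin n) (Fin n) ℂ) : ℝ :=
  ∑ i, ∑ j, c i j * logGramDet (x i) H j - K * Real.log ‖H.det‖

theorem sum_log_add_log_le_log_norm_det {m J 𝕜 : Type*} [Fintype m] [DecidableEq m] [Fintype J]
    [DecidableEq J] [RCLike 𝕜] {θ : m → ℝ} (hθ : ∀ k, 0 < θ k) {Z : Matrix m J 𝕜} {e : J → m}
    (he : (Z.submatrix e id).det ≠ 0) :
    ∑ a, Real.log (θ (e a)) + Real.log (‖(Z.submatrix e id).det‖ ^ 2) ≤
      Real.log ‖(Zᴴ * diagonal (fun k => (θ k : 𝕜)) * Z).det‖ := by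
  let D : Matrix m m 𝕜 := diagonal fun k => (Real.sqrt (θ k) : 𝕜)
  have hDD : Dᴴ * D = diagonal (fun k => (θ k : 𝕜)) := by
    simp only [D, diagonal_conjTranspose, diagonal_mul_diagonal]
    congr 1
    ext k
    rw [Pi.star_apply, RCLike.star_def, RCLike.conj_ofReal, ← RCLike.ofReal_mul,
      Real.mul_self_sqrt (hθ k).le]
  have hgram : Zᴴ * diagonal (fun k => (θ k : 𝕜)) * Z = (D * Z)ᴴ * (D * Z) := by
    rw [conjTranspose_mul, ← hDD]
    simp only [Matrix.mul_assoc]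
  have hminor : ((D * Z).submatrix e id).det =
      (∏ a, (Real.sqrt (θ (e a)) : 𝕜)) * (Z.submatrix e id).det := by
    rw [← det_diagonal, ← det_mul]
    congr 1
    ext a b
    simp [D, diagonal_mul]
  have hprod : ‖∏ a, (Real.sqrt (θ (e a)) : 𝕜)‖ ^ 2 = ∏ a, θ (e a) := by
    rw [norm_prod, ← Finset.prod_pow]
    simp [Real.sq_sqrt (hθ _).le]
  have hle := norm_det_submatrix_sq_le (D * Z) e
  rw [hminor, norm_mul, mul_pow, hprod, ← hgram] at hle
  have hpos : 0 < ∏ a, θ (e a) := Finset.prod_pos fun a _ => hθ _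
  rw [← Real.log_prod fun a _ => (hθ _).ne', ← Real.log_mul hpos.ne' (by positivity)]
  exact Real.log_le_log (by positivity) hle

variable {c : ι → Fin n → ℝ} {K : ℝ} {x : ι → Matrix (Fin n) (Fin n) ℂ}

theorem posDef_conj_diagonal_iff {W : Matrix (Fin n) (Fin n) ℂ} (hW : W ∈ unitaryGroup (Fin n) ℂ)
    {θ : Fin n → ℝ} : (W * diagonal (fun k => (θ k : ℂ)) * Wᴴ).PosDef ↔ ∀ k, 0 < θ k := by
  have hunit : IsUnit W := (isUnit_iff_isUnit_det W).2 (UnitaryGroup.det_isUnit ⟨W, hW⟩)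
  rw [← star_eq_conjTranspose, hunit.posDef_star_right_conjugate_iff, posDef_diagonal_iff]
  simp

theorem log_norm_det_conj_diagonal {W : Matrix (Fin n) (Fin n) ℂ}
    (hW : W ∈ unitaryGroup (Fin n) ℂ) {θ : Fin n → ℝ} (hθ : ∀ k, 0 < θ k) :
    Real.log ‖(W * diagonal (fun k => (θ k : ℂ)) * Wᴴ).det‖ = ∑ k, Real.log (θ k) := by
  rw [det_mul_comm, ← Matrix.mul_assoc, ← star_eq_conjTranspose, mem_unitaryGroup_iff'.1 hW,
    Matrix.one_mul, det_diagonal, norm_prod, Real.log_prod fun k _ => by simpa using (hθ k).ne']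
  simp [abs_of_pos (hθ _)]

theorem sum_log_le_kempfNess (hc : ∀ i j, 0 ≤ c i j) {W : Matrix (Fin n) (Fin n) ℂ}
    (hW : W ∈ unitaryGroup (Fin n) ℂ) {e : ∀ (_ : ι) (j : Fin n), Set.Iic j → Fin n}
    (he : ∀ i j, ((Wᴴ * firstCols (x i) j).submatrix (e i j) id).det ≠ 0)
    (hle : ∀ t : Fin n → ℝ, Antitone t → K * ∑ k, t k ≤ ∑ i, ∑ j, c i j * ∑ a, t (e i j a))
    {θ : Fin n → ℝ} (hθ : ∀ k, 0 < θ k) (hanti : Antitone θ) :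
    ∑ i, ∑ j, c i j * Real.log (‖((Wᴴ * firstCols (x i) j).submatrix (e i j) id).det‖ ^ 2) ≤
      kempfNess c K x (W * diagonal (fun k => (θ k : ℂ)) * Wᴴ) := by
  have hlog := hle (fun k => Real.log (θ k)) fun a b hab => Real.log_le_log (hθ b) (hanti hab)
  have hgram (i : ι) (j : Fin n) := mul_le_mul_of_nonneg_left
    (sum_log_add_log_le_log_norm_det hθ (he i j)) (hc i j)
  have hsum := Finset.sum_le_sum fun i (_ : i ∈ Finset.univ) =>
    Finset.sum_le_sum fun j (_ : j ∈ Finset.univ) => hgram i j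
  simp only [mul_add, Finset.sum_add_distrib] at hsum
  rw [kempfNess, log_norm_det_conj_diagonal hW hθ, le_sub_iff_add_le']
  refine (add_le_add_left hlog _).trans (hsum.trans_eq ?_)
  simp only [logGramDet, conjTranspose_mul, conjTranspose_conjTranspose, Matrix.mul_assoc]
  rfl

theorem exists_eventually_le_kempfNess (hc : ∀ i j, 0 ≤ c i j) (hx : ∀ i, IsUnit (x i).det)
    (hcard : ∑ i, ∑ j, c i j * Fintype.card (Set.Iic j) = K * n) (h : IsSemistable c K x)
    {W₀ : Matrix (Fin n) (Fin n) ℂ} (hW₀ : W₀ ∈ unitaryGroup (Fin n) ℂ) :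
    ∃ C : ℝ, ∀ᶠ W in 𝓝[unitaryGroup (Fin n) ℂ] W₀, ∀ θ : Fin n → ℝ, (∀ k, 0 < θ k) →
      Antitone θ → C ≤ kempfNess c K x (W * diagonal (fun k => (θ k : ℂ)) * Wᴴ) := by
  obtain ⟨e, he, hle⟩ := exists_rows_forall_antitone_le hc hx hcard h hW₀
  let d (W : Matrix (Fin n) (Fin n) ℂ) (i : ι) (j : Fin n) : ℝ :=
    ‖((Wᴴ * firstCols (x i) j).submatrix (e i j) id).det‖
  have hpos (i : ι) (j : Fin n) : 0 < d W₀ i j / 2 := half_pos (norm_pos_iff.2 (he i j))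
  have hd : ∀ᶠ W in 𝓝[unitaryGroup (Fin n) ℂ] W₀, ∀ i j, d W₀ i j / 2 < d W i j := by
    refine eventually_all.2 fun i => eventually_all.2 fun j => ?_
    have hcont : Continuous fun W => d W i j :=
      (((continuous_id.matrix_conjTranspose.matrix_mul continuous_const).matrix_submatrix
        _ _).matrix_det).norm
    exact hcont.continuousWithinAt.eventually
      (lt_mem_nhds (half_lt_self (norm_pos_iff.2 (he i j))))
  refine ⟨∑ i, ∑ j, c i j * Real.log ((d W₀ i j / 2) ^ 2), ?_⟩
  filter_upwards [hd, self_mem_nhdsWithin] with W hdW hW θ hθ hanti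
  refine le_trans ?_ (sum_log_le_kempfNess hc hW
    (fun i j => norm_pos_iff.1 ((hpos i j).trans (hdW i j))) hle hθ hanti)
  refine Finset.sum_le_sum fun i _ => Finset.sum_le_sum fun j _ =>
    mul_le_mul_of_nonneg_left (Real.log_le_log (pow_pos (hpos i j) 2) ?_) (hc i j)
  exact pow_le_pow_left₀ (hpos i j).le (hdW i j).le 2

theorem bddBelow_kempfNess (hc : ∀ i j, 0 ≤ c i j) (hx : ∀ i, IsUnit (x i).det)
    (hcard : ∑ i, ∑ j, c i j * Fintype.card (Set.Iic j) = K * n) (h : IsSemistable c K x) :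
    BddBelow (kempfNess c K x '' {H | H.PosDef}) := by
  let f (q : Matrix (Fin n) (Fin n) ℂ × (Fin n → ℝ)) : ℝ :=
    kempfNess c K x (q.1 * diagonal (fun k => (q.2 k : ℂ)) * q.1ᴴ)
  let Θ : Set (Fin n → ℝ) := {θ | (∀ k, 0 < θ k) ∧ Antitone θ}
  have hf : BddBelow (f '' ((unitaryGroup (Fin n) ℂ : Set (Matrix (Fin n) (Fin n) ℂ)) ×ˢ Θ)) := by
    refine isCompact_unitaryGroup.induction_on (p := fun s => BddBelow (f '' (s ×ˢ Θ)))
      (by simp) (fun s t hst ht => ht.mono (Set.image_mono (Set.prod_mono_left hst)))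
      (fun s t hs ht => by rw [Set.union_prod, Set.image_union]; exact hs.union ht)
      fun W₀ hW₀ => ?_
    obtain ⟨C, hC⟩ := exists_eventually_le_kempfNess hc hx hcard h hW₀
    refine ⟨_, hC, C, ?_⟩
    rintro _ ⟨⟨W, θ⟩, ⟨hW, hθ, hanti⟩, rfl⟩
    exact hW θ hθ hanti
  refine hf.mono ?_
  rintro _ ⟨H, hH, rfl⟩
  obtain ⟨W, hW, θ, hanti, rfl⟩ := exists_antitone_eq_conj_diagonal hH.isHermitian
  exact ⟨(W, θ), ⟨hW, (posDef_conj_diagonal_iff hW).1 hH, hanti⟩, rfl⟩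

end KempfNess

section Minimizer

variable {n : ℕ} {ι : Type*} [Fintype ι] {c : ι → Fin n → ℝ} {K : ℝ}
  {U x : ι → Matrix (Fin n) (Fin n) ℂ} {g H : Matrix (Fin n) (Fin n) ℂ}

theorem logGramDet_mul (g x H : Matrix (Fin n) (Fin n) ℂ) (j : Fin n) :
    logGramDet (g * x) H j = logGramDet x (gᴴ * H * g) j := by
  simp only [logGramDet, firstCols_mul, conjTranspose_mul, Matrix.mul_assoc]

theorem logGramDet_eq_sub {U M : Matrix (Fin n) (Fin n) ℂ} (hU : U ∈ unitaryGroup (Fin n) ℂ)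
    (hM : IsUnit M.det) {j : Fin n} (hUM : flagProj U j * firstCols M j = firstCols M j)
    (hH : H.PosDef) : logGramDet U H j = logGramDet M H j - logGramDet M 1 j := by
  set T := (firstCols U j)ᴴ * firstCols M j
  have hcols : firstCols M j = firstCols U j * T := by
    rw [← Matrix.mul_assoc, firstCols_mul_conjTranspose_self hU, hUM]
  have hgram (H : Matrix (Fin n) (Fin n) ℂ) : ((firstCols M j)ᴴ * H * firstCols M j).det =
      Tᴴ.det * ((firstCols U j)ᴴ * H * firstCols U j).det * T.det := by
    rw [hcols, conjTranspose_mul, ← det_mul, ← det_mul]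
    simp only [Matrix.mul_assoc]
  have hone : ((firstCols M j)ᴴ * (1 : Matrix (Fin n) (Fin n) ℂ) * firstCols M j).det =
      Tᴴ.det * T.det := by
    rw [hgram, Matrix.mul_one, conjTranspose_firstCols_mul_self hU, det_one, mul_one]
  have hdet (H : Matrix (Fin n) (Fin n) ℂ) (hH : H.PosDef) :=
    (posDef_conjTranspose_firstCols_mul_mul hH hM j).det_pos.ne'
  simp only [logGramDet]
  rw [← Real.log_div (norm_ne_zero_iff.2 (hdet H hH)) (norm_ne_zero_iff.2 (hdet 1 PosDef.one)),
    ← norm_div, hgram, mul_right_comm, ← hone, mul_div_cancel_left₀ _ (hdet 1 PosDef.one)]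

theorem kempfNess_eq_sub (hg : IsUnit g.det) (hx : ∀ i, IsUnit (x i).det)
    (hU : ∀ i, U i ∈ unitaryGroup (Fin n) ℂ)
    (hUx : ∀ i j, flagProj (U i) j * firstCols (g * x i) j = firstCols (g * x i) j)
    (hH : H.PosDef) :
    kempfNess c K U H = kempfNess c K x (gᴴ * H * g) - kempfNess c K x (gᴴ * g) := by
  have hgram (i : ι) (j : Fin n) : logGramDet (U i) H j =
      logGramDet (x i) (gᴴ * H * g) j - logGramDet (x i) (gᴴ * g) j := by
    rw [logGramDet_eq_sub (hU i) (by rw [det_mul]; exact hg.mul (hx i)) (hUx i j) hH,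
      logGramDet_mul, logGramDet_mul, Matrix.mul_one]
  have hdet : Real.log ‖(gᴴ * H * g).det‖ = Real.log ‖(gᴴ * g).det‖ + Real.log ‖H.det‖ := by
    rw [← Real.log_mul (by simp [hg.ne_zero]) (by simpa using hH.det_pos.ne'), ← norm_mul]
    simp only [det_mul]
    ring_nf
  simp only [kempfNess, hgram, hdet, mul_sub, Finset.sum_sub_distrib]
  ring

open scoped MatrixOrder in
theorem exists_unitary_forall_neg_le_kempfNess (hx : ∀ i, IsUnit (x i).det)
    (hbdd : BddBelow (kempfNess c K x '' {H | H.PosDef})) {ε : ℝ} (hε : 0 < ε) :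
    ∃ U : ι → Matrix (Fin n) (Fin n) ℂ, (∀ i, U i ∈ unitaryGroup (Fin n) ℂ) ∧
      ∀ H : Matrix (Fin n) (Fin n) ℂ, H.PosDef → -ε ≤ kempfNess c K U H := by
  obtain ⟨_, ⟨H₀, hH₀, rfl⟩, hlt⟩ := exists_lt_of_csInf_lt
    (Set.Nonempty.image (kempfNess c K x) (s := {H | H.PosDef}) ⟨1, PosDef.one⟩)
    (lt_add_of_pos_right (sInf _) hε)
  obtain ⟨g, hgunit, rfl⟩ :=
    CStarAlgebra.isStrictlyPositive_iff_eq_star_mul_self.1 hH₀.isStrictlyPositive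
  have hg : IsUnit g.det := (isUnit_iff_isUnit_det g).1 hgunit
  choose U hU hUx using fun i => exists_unitary_forall_flagProj_mul_firstCols (g * x i)
  refine ⟨U, hU, fun H hH => ?_⟩
  have hmem : (gᴴ * H * g).PosDef := hH.conjTranspose_mul_mul_same
    (mulVec_injective_of_isUnit hgunit)
  have hinf := csInf_le hbdd (Set.mem_image_of_mem (kempfNess c K x) hmem)
  rw [star_eq_conjTranspose] at hlt
  rw [kempfNess_eq_sub hg hx hU hUx hH]
  linarith

theorem tendsto_logGramDet {α : Type*} {l : Filter α} {U : α → Matrix (Fin n) (Fin n) ℂ}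
    (hg : IsUnit g.det) (hU : Tendsto U l (𝓝 g)) (hH : H.PosDef) (j : Fin n) :
    Tendsto (fun a => logGramDet (U a) H j) l (𝓝 (logGramDet g H j)) := by
  have hdet : Continuous fun M : Matrix (Fin n) (Fin n) ℂ =>
      ‖((firstCols M j)ᴴ * H * firstCols M j).det‖ := by
    have hcols : Continuous fun M : Matrix (Fin n) (Fin n) ℂ => firstCols M j :=
      continuous_id.matrix_submatrix _ _
    fun_prop
  exact ((hdet.tendsto g).comp hU).log
    (norm_ne_zero_iff.2 (posDef_conjTranspose_firstCols_mul_mul hH hg j).det_pos.ne')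

theorem exists_unitary_forall_kempfNess_nonneg (hx : ∀ i, IsUnit (x i).det)
    (hbdd : BddBelow (kempfNess c K x '' {H | H.PosDef})) :
    ∃ U : ι → Matrix (Fin n) (Fin n) ℂ, (∀ i, U i ∈ unitaryGroup (Fin n) ℂ) ∧
      ∀ H : Matrix (Fin n) (Fin n) ℂ, H.PosDef → 0 ≤ kempfNess c K U H := by
  choose U hU hle using fun m : ℕ =>
    exists_unitary_forall_neg_le_kempfNess hx hbdd (Nat.one_div_pos_of_nat (n := m) (α := ℝ))
  have : FirstCountableTopology (Matrix (Fin n) (Fin n) ℂ) :=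
    inferInstanceAs (FirstCountableTopology (Fin n → Fin n → ℂ))
  obtain ⟨V, hV, φ, hφ, hlim⟩ :=
    (isCompact_univ_pi fun _ : ι => isCompact_unitaryGroup (n := Fin n) (𝕜 := ℂ)).tendsto_subseq
      fun m => Set.mem_univ_pi.2 (hU m)
  have hV := Set.mem_univ_pi.1 hV
  refine ⟨V, hV, fun H hH => ?_⟩
  have hkn : Tendsto (fun m => kempfNess c K (U (φ m)) H) atTop (𝓝 (kempfNess c K V H)) :=
    (tendsto_finsetSum _ fun i _ => tendsto_finsetSum _ fun j _ =>
      (tendsto_logGramDet (UnitaryGroup.det_isUnit ⟨V i, hV i⟩)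
        (tendsto_pi_nhds.1 hlim i) hH j).const_mul _).sub_const _
  have hneg := ((tendsto_one_div_add_atTop_nhds_zero_nat (𝕜 := ℝ)).comp hφ.tendsto_atTop).neg
  rw [neg_zero] at hneg
  exact le_of_tendsto_of_tendsto' hneg hkn fun m => hle (φ m) H hH

end Minimizer

section CriticalPoint

theorem log_norm_det_le_re_trace_sub_card {J 𝕜 : Type*} [Fintype J] [DecidableEq J] [RCLike 𝕜]
    {A : Matrix J J 𝕜} (hA : A.PosDef) :
    Real.log ‖A.det‖ ≤ RCLike.re A.trace - Fintype.card J := by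
  have hcard : (Fintype.card J : ℝ) = ∑ _ : J, 1 := by simp
  rw [hA.isHermitian.det_eq_prod_eigenvalues, hA.isHermitian.trace_eq_sum_eigenvalues, norm_prod,
    Real.log_prod fun k _ => by simpa using (hA.eigenvalues_pos k).ne', map_sum, hcard,
    ← Finset.sum_sub_distrib]
  refine Finset.sum_le_sum fun k _ => ?_
  rw [RCLike.norm_ofReal, Real.log_abs, RCLike.ofReal_re]
  exact Real.log_le_sub_one_of_pos (hA.eigenvalues_pos k)

variable {n : ℕ} {ι : Type*} [Fintype ι] {c : ι → Fin n → ℝ} {K : ℝ}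
  {U : ι → Matrix (Fin n) (Fin n) ℂ} {H : Matrix (Fin n) (Fin n) ℂ}

theorem logGramDet_le {U : Matrix (Fin n) (Fin n) ℂ} (hU : U ∈ unitaryGroup (Fin n) ℂ)
    (hH : H.PosDef) (j : Fin n) : logGramDet U H j ≤ ((H - 1) * flagProj U j).trace.re := by
  have htrace : ((firstCols U j)ᴴ * H * firstCols U j).trace = (H * flagProj U j).trace := by
    rw [Matrix.mul_assoc, trace_mul_comm, Matrix.mul_assoc, firstCols_mul_conjTranspose_self hU]
  have hle := log_norm_det_le_re_trace_sub_card
    (posDef_conjTranspose_firstCols_mul_mul hH (UnitaryGroup.det_isUnit ⟨U, hU⟩) j)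
  rw [htrace] at hle
  rw [sub_mul, trace_sub, Matrix.one_mul, trace_flagProj hU, Complex.sub_re, Complex.natCast_re]
  exact hle

theorem kempfNess_le (hc : ∀ i j, 0 ≤ c i j) (hU : ∀ i, U i ∈ unitaryGroup (Fin n) ℂ)
    (hH : H.PosDef) : kempfNess c K U H ≤
      ((H - 1) * ∑ i, ∑ j, c i j • flagProj (U i) j).trace.re - K * Real.log ‖H.det‖ := by
  simp only [kempfNess, Finset.mul_sum, Matrix.mul_smul, trace_sum, trace_smul, Complex.re_sum,
    Complex.smul_re, smul_eq_mul]
  gcongr with i _ j _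
  · exact hc i j
  · exact logGramDet_le (hU i) hH j

theorem conj_diagonal_sub_smul_one {W : Matrix (Fin n) (Fin n) ℂ}
    (hW : W ∈ unitaryGroup (Fin n) ℂ) (φ : Fin n → ℝ) (a : ℝ) :
    W * diagonal (fun k => (φ k : ℂ)) * Wᴴ - a • (1 : Matrix (Fin n) (Fin n) ℂ) =
      W * diagonal (fun k => ((φ k - a : ℝ) : ℂ)) * Wᴴ := by
  have hdiag : diagonal (fun k => ((φ k - a : ℝ) : ℂ)) =
      diagonal (fun k => (φ k : ℂ)) - a • (1 : Matrix (Fin n) (Fin n) ℂ) := by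
    ext k l
    by_cases hkl : k = l <;> simp [hkl]
  rw [hdiag, Matrix.mul_sub, Matrix.sub_mul, Matrix.mul_smul, Matrix.smul_mul, Matrix.mul_one,
    ← star_eq_conjTranspose, mem_unitaryGroup_iff.1 hW]

theorem re_trace_conj_diagonal_mul_conj_diagonal {W : Matrix (Fin n) (Fin n) ℂ}
    (hW : W ∈ unitaryGroup (Fin n) ℂ) (θ φ : Fin n → ℝ) :
    ((W * diagonal (fun k => (θ k : ℂ)) * Wᴴ) *
      (W * diagonal (fun k => (φ k : ℂ)) * Wᴴ)).trace.re = ∑ k, θ k * φ k := by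
  have hcancel : Wᴴ * W = 1 := mem_unitaryGroup_iff'.1 hW
  have htrace : ((W * diagonal (fun k => (θ k : ℂ)) * Wᴴ) *
      (W * diagonal (fun k => (φ k : ℂ)) * Wᴴ)).trace =
      (diagonal (fun k => (θ k : ℂ)) * (Wᴴ * W) * diagonal (fun k => (φ k : ℂ)) *
        (Wᴴ * W)).trace := by
    simp only [Matrix.mul_assoc]
    rw [trace_mul_comm]
    simp only [Matrix.mul_assoc]
  rw [htrace, hcancel, Matrix.mul_one, Matrix.mul_one, diagonal_mul_diagonal, trace_diagonal]
  simp

theorem hasDerivAt_mul_sum_sub_mul_sum_log {m : Type*} [Fintype m] (K : ℝ) (φ : m → ℝ) :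
    HasDerivAt (fun s => ∑ k, s * (φ k - K) * φ k - K * ∑ k, Real.log (1 + s * (φ k - K)))
      (∑ k, (φ k - K) ^ 2) 0 := by
  have hmul (a : ℝ) : HasDerivAt (fun s => s * a) a 0 := hasDerivAt_mul_const a
  have hlog (k : m) : HasDerivAt (fun s => Real.log (1 + s * (φ k - K))) (φ k - K) 0 := by
    simpa using ((hmul (φ k - K)).const_add 1).log (by simp)
  refine ((HasDerivAt.fun_sum fun k _ => (hmul (φ k - K)).mul_const (φ k)).sub
    ((HasDerivAt.fun_sum fun k _ => hlog k).const_mul K)).congr_deriv ?_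
  rw [Finset.mul_sum, ← Finset.sum_sub_distrib]
  exact Finset.sum_congr rfl fun k _ => by ring

theorem isBalanced_of_forall_kempfNess_nonneg (hc : ∀ i j, 0 ≤ c i j)
    (hU : ∀ i, U i ∈ unitaryGroup (Fin n) ℂ)
    (hmin : ∀ H : Matrix (Fin n) (Fin n) ℂ, H.PosDef → 0 ≤ kempfNess c K U H) :
    IsBalanced c K U := by
  -- The first variation of the Kempf–Ness functional at the identity, in the direction of the
  -- defect `S` in the balance equation, is `tr (S * S)`.
  have hherm : (∑ i, ∑ j, c i j • flagProj (U i) j).IsHermitian :=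
    isSelfAdjoint_sum _ fun i _ => isSelfAdjoint_sum _ fun j _ =>
      .smul (.all (c i j)) (isStarProjection_flagProj (hU i) j).isSelfAdjoint
  obtain ⟨W, hW, φ, -, hφ⟩ := exists_antitone_eq_conj_diagonal hherm
  have hpos : ∀ᶠ s in 𝓝 (0 : ℝ), ∀ k, 0 < 1 + s * (φ k - K) :=
    eventually_all.2 fun k => (show Continuous fun s : ℝ => 1 + s * (φ k - K) by
      fun_prop).continuousAt.eventually_const_lt (by simp)
  have hlocal : IsLocalMin
      (fun s => ∑ k, s * (φ k - K) * φ k - K * ∑ k, Real.log (1 + s * (φ k - K))) 0 := by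
    filter_upwards [hpos] with s hs
    have hle := (hmin _ ((posDef_conj_diagonal_iff hW).2 hs)).trans
      (kempfNess_le hc hU ((posDef_conj_diagonal_iff hW).2 hs))
    have hsub := conj_diagonal_sub_smul_one hW (fun k => 1 + s * (φ k - K)) 1
    rw [one_smul] at hsub
    rw [log_norm_det_conj_diagonal hW hs, hsub, hφ,
      re_trace_conj_diagonal_mul_conj_diagonal hW] at hle
    simpa using hle
  have hsq := hlocal.hasDerivAt_eq_zero (hasDerivAt_mul_sum_sub_mul_sum_log K φ)
  have hφK (k : Fin n) : φ k - K = 0 :=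
    pow_eq_zero_iff two_ne_zero |>.1 <|
      (Finset.sum_eq_zero_iff_of_nonneg fun k _ => sq_nonneg (φ k - K)).1 hsq k (Finset.mem_univ k)
  rw [IsBalanced, ← sub_eq_zero, hφ, conj_diagonal_sub_smul_one hW]
  simp [hφK]

end CriticalPoint

section Horn

variable {n : ℕ} {ι : Type*} [Fintype ι] {c : ι → Fin n → ℝ} {K : ℝ}
  {U : ι → Matrix (Fin n) (Fin n) ℂ}

theorem IsBalanced.sum_mul_card (h : IsBalanced c K U)
    (hU : ∀ i, U i ∈ unitaryGroup (Fin n) ℂ) :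
    ∑ i, ∑ j, c i j * Fintype.card (Set.Iic j) = K * n := by
  have htrace := h.sum_re_trace_mul 1
  simp only [Matrix.one_mul, trace_flagProj (hU _)] at htrace
  simpa using htrace

theorem exists_isBalanced_sum {σ : Type*} [Fintype σ] {c : σ → ι → Fin n → ℝ} {K : σ → ℝ}
    {U : σ → ι → Matrix (Fin n) (Fin n) ℂ} (hc : ∀ s i j, 0 ≤ c s i j)
    (hU : ∀ s i, U s i ∈ unitaryGroup (Fin n) ℂ) (h : ∀ s, IsBalanced (c s) (K s) (U s)) :
    ∃ V : ι → Matrix (Fin n) (Fin n) ℂ,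
      (∀ i, V i ∈ unitaryGroup (Fin n) ℂ) ∧ IsBalanced (∑ s, c s) (∑ s, K s) V := by
  obtain ⟨x, hx, hss⟩ := exists_isSemistable hc hU h
  have hsum : ∀ i j, 0 ≤ (∑ s, c s) i j := fun i j => by
    simpa only [Finset.sum_apply] using Finset.sum_nonneg fun s _ => hc s i j
  have hcard : ∑ i, ∑ j, (∑ s, c s) i j * Fintype.card (Set.Iic j) = (∑ s, K s) * n := by
    rw [Finset.sum_mul, ← Finset.sum_congr rfl fun s _ => (h s).sum_mul_card (hU s)]
    simp only [Finset.sum_apply, Finset.sum_mul]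
    exact (Finset.sum_congr rfl fun i _ => Finset.sum_comm).trans Finset.sum_comm
  obtain ⟨V, hV, hmin⟩ := exists_unitary_forall_kempfNess_nonneg hx
    (bddBelow_kempfNess hsum hx hcard (.sum hss))
  exact ⟨V, hV, isBalanced_of_forall_kempfNess_nonneg hsum hV hmin⟩

/-- The additive Horn problem for the spectra `lam i` has a solution: some Hermitian matrices with
these spectra sum to zero. The matrices are given by unitary diagonalizations. -/
def HornSolvable (lam : ι → Fin n → ℝ) : Prop :=
  ∃ U : ι → Matrix (Fin n) (Fin n) ℂ, (∀ i, U i ∈ unitaryGroup (Fin n) ℂ) ∧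
    ∑ i, U i * diagonal (fun k => (lam i k : ℂ)) * (U i)ᴴ = 0

theorem conj_diagonal_eq_sum_smul_flagProj_sub {U : Matrix (Fin n) (Fin n) ℂ}
    (hU : U ∈ unitaryGroup (Fin n) ℂ) (c : Fin n → ℝ) (κ : ℝ) :
    U * diagonal (fun k =>
        (((∑ j, c j • (Set.Iic j).indicator (1 : Fin n → ℝ) - κ • 1) k : ℝ) : ℂ)) * Uᴴ =
      ∑ j, c j • flagProj U j - κ • (1 : Matrix (Fin n) (Fin n) ℂ) := by
  have hdiag : diagonal (fun k => ((∑ j, c j • (Set.Iic j).indicator (1 : Fin n → ℝ)) k : ℂ)) =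
      ∑ j, c j • diagonal ((Set.Iic j).indicator (1 : Fin n → ℂ)) := by
    ext k l
    by_cases hkl : k = l <;> simp [Matrix.sum_apply, hkl, Set.indicator_apply, apply_ite]
  have hflag : ∑ j, c j • flagProj U j =
      U * (∑ j, c j • diagonal ((Set.Iic j).indicator (1 : Fin n → ℂ))) * Uᴴ := by
    simp only [flagProj_of_mem_unitaryGroup hU, Finset.mul_sum, Finset.sum_mul, Matrix.mul_smul,
      Matrix.smul_mul]
  rw [hflag, ← hdiag, conj_diagonal_sub_smul_one hU]
  simp only [Pi.sub_apply, Pi.smul_apply, Pi.one_apply, smul_eq_mul, mul_one]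

theorem hornSolvable_iff_exists_isBalanced (c : ι → Fin n → ℝ) (κ : ι → ℝ) :
    HornSolvable (fun i => ∑ j, c i j • (Set.Iic j).indicator (1 : Fin n → ℝ) - κ i • 1) ↔
      ∃ U : ι → Matrix (Fin n) (Fin n) ℂ,
        (∀ i, U i ∈ unitaryGroup (Fin n) ℂ) ∧ IsBalanced c (∑ i, κ i) U := by
  refine exists_congr fun U => and_congr_right fun hU => ?_
  simp only [conj_diagonal_eq_sum_smul_flagProj_sub (hU _), Finset.sum_sub_distrib,
    ← Finset.sum_smul, sub_eq_zero, IsBalanced]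

theorem HornSolvable.sum {σ : Type*} [Fintype σ] {lam : σ → ι → Fin n → ℝ}
    (hanti : ∀ s i, Antitone (lam s i)) (h : ∀ s, HornSolvable (lam s)) :
    HornSolvable (∑ s, lam s) := by
  choose c κ hc hlam using fun s i => exists_eq_sum_indicator_Iic_sub_of_antitone (hanti s i)
  have hlam : lam = fun s i => ∑ j, c s i j • (Set.Iic j).indicator (1 : Fin n → ℝ) - κ s i • 1 :=
    funext fun s => funext fun i => hlam s i
  subst hlam
  choose U hU hbal using fun s => (hornSolvable_iff_exists_isBalanced (c s) (κ s)).1 (h s)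
  have hsum := (hornSolvable_iff_exists_isBalanced (∑ s, c s) (∑ s, κ s)).2 (by
    simpa only [Finset.sum_apply, Finset.sum_comm (γ := ι)] using exists_isBalanced_sum hc hU hbal)
  convert hsum using 1
  ext i k
  simp only [Finset.sum_apply, Finset.sum_smul, Finset.sum_sub_distrib, Pi.sub_apply]
  rw [Finset.sum_comm]

theorem HornSolvable.comp_equiv {lam : ι → Fin n → ℝ} (h : HornSolvable lam) (e : ι ≃ ι) :
    HornSolvable (lam ∘ e) := by
  obtain ⟨U, hU, hsum⟩ := h
  exact ⟨U ∘ e, fun i => hU (e i), (e.sum_comp _).trans hsum⟩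

theorem HornSolvable.const_of_smul {G : Type*} [Fintype G] [AddGroup G] {lam : Fin n → ℝ}
    (hanti : Antitone lam) {p : G → ℝ} (hp : p ∈ stdSimplex ℝ G)
    (h : HornSolvable fun i => p i • lam) : HornSolvable fun _ : G => lam := by
  -- Translating the weights by the elements of the index group averages them out.
  convert HornSolvable.sum (lam := fun s i => p (i + s) • lam)
    (fun s i => hanti.const_smul (hp.1 (i + s))) fun s => h.comp_equiv (Equiv.addRight s) with i
  rw [Finset.sum_apply, ← Finset.sum_smul]
  exact ((congrArg (· • lam) ((Equiv.sum_comp (Equiv.addLeft i) p).trans hp.2)).trans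
    (one_smul ℝ lam)).symm

end Horn

section Orbit

theorem exists_perm_comp_eq_of_map_eq {m R : Type*} [Fintype m] {a b : m → R}
    (h : Finset.univ.val.map a = Finset.univ.val.map b) :
    ∃ σ : Equiv.Perm m, b ∘ σ = a := by
  classical
  have hfiber (r : R) : Nonempty ({i // a i = r} ≃ {i // b i = r}) := by
    rw [← Fintype.card_eq, Fintype.card_subtype, Fintype.card_subtype]
    have hcount := congrArg (Multiset.count r) h
    simp only [Multiset.count_map, eq_comm (a := r)] at hcount
    exact hcount
  exact ⟨.ofFiberEquiv fun r => (hfiber r).some, funext fun i => Equiv.ofFiberEquiv_map _ i⟩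

theorem mem_coadjointOrbit_iff {n : ℕ} {lam : Fin n → ℝ} (hsum : ∑ k, lam k = 0)
    {A : Matrix (Fin n) (Fin n) ℂ} :
    A ∈ coadjointOrbit lam ↔
      ∃ U ∈ unitaryGroup (Fin n) ℂ, A = U * diagonal (fun k => (lam k : ℂ)) * Uᴴ := by
  constructor
  · rintro ⟨-, hA, σ, hσ⟩
    simpa only [hσ] using exists_eq_conj_diagonal_eigenvalues_comp hA σ
  · rintro ⟨U, hU, rfl⟩
    have hcancel : Uᴴ * U = 1 := mem_unitaryGroup_iff'.1 hU
    have hherm : (U * diagonal (fun k => (lam k : ℂ)) * Uᴴ).IsHermitian :=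
      isHermitian_mul_mul_conjTranspose U (isHermitian_diagonal_of_self_adjoint _
        (funext fun k => Complex.conj_ofReal (lam k)))
    refine ⟨?_, hherm, ?_⟩
    · rw [trace_mul_comm, ← Matrix.mul_assoc, hcancel, Matrix.one_mul, trace_diagonal]
      exact_mod_cast hsum
    · have hprod : (∏ k, (Polynomial.X - Polynomial.C (lam k : ℂ))).roots =
          Finset.univ.val.map fun k => (lam k : ℂ) := by
        simpa only [Finset.prod_eq_multiset_prod, Multiset.map_map, Function.comp_def] using
          Polynomial.roots_multiset_prod_X_sub_C (Finset.univ.val.map fun k => (lam k : ℂ))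
      have hroots := hherm.roots_charpoly_eq_eigenvalues
      rw [charpoly_mul_comm, ← Matrix.mul_assoc, hcancel, Matrix.one_mul, charpoly_diagonal,
        hprod] at hroots
      obtain ⟨σ, hσ⟩ := exists_perm_comp_eq_of_map_eq hroots
      exact ⟨σ, fun k => Complex.ofReal_injective (congrFun hσ k)⟩

theorem exists_mem_coadjointOrbit_sum_smul_eq_zero_iff {n : ℕ} {lam : Fin n → ℝ}
    (hsum : ∑ k, lam k = 0) {ι : Type*} [Fintype ι] (p : ι → ℝ) :
    (∃ A : ι → Matrix (Fin n) (Fin n) ℂ, (∀ i, A i ∈ coadjointOrbit lam) ∧ ∑ i, p i • A i = 0) ↔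
      HornSolvable fun i => p i • lam := by
  have hsmul (a : ℝ) (U : Matrix (Fin n) (Fin n) ℂ) :
      U * diagonal (fun k => ((a • lam) k : ℂ)) * Uᴴ =
        a • (U * diagonal (fun k => (lam k : ℂ)) * Uᴴ) := by
    rw [← Matrix.smul_mul, ← Matrix.mul_smul, ← diagonal_smul]
    congr 3
    ext k
    simp
  simp only [HornSolvable, hsmul, mem_coadjointOrbit_iff hsum]
  constructor
  · rintro ⟨A, hA, h⟩
    choose U hU hAU using hA
    exact ⟨U, hU, by simpa only [hAU] using h⟩
  · rintro ⟨U, hU, h⟩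
    exact ⟨_, fun i => ⟨U i, hU i, rfl⟩, h⟩

theorem convexHull_range_eq_image_stdSimplex {ι R E : Type*} [Fintype ι] [Field R] [LinearOrder R]
    [IsStrictOrderedRing R] [AddCommGroup E] [Module R E] (f : ι → E) :
    convexHull R (Set.range f) = Fintype.linearCombination R f '' stdSimplex R ι := by
  classical
  rw [← convexHull_rangle_single_eq_stdSimplex, LinearMap.image_convexHull, ← Set.range_comp]
  congr 2
  ext i
  simp

theorem mem_partialConvexHull_iff {E : Type*} [AddCommGroup E] [Module ℝ E] {r : ℕ} {X : Set E}
    {y : E} : y ∈ partialConvexHull r X ↔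
      ∃ p ∈ stdSimplex ℝ (Fin r), ∃ f : Fin r → E, (∀ i, f i ∈ X) ∧ ∑ i, p i • f i = y := by
  simp only [partialConvexHull, Set.mem_ofPred_eq, convexHull_range_eq_image_stdSimplex,
    Set.mem_image, Fintype.linearCombination_apply]
  tauto

end Orbit

/-- `0 ∈ C_r(O_λ)` iff the zero matrix is a sum of `r` elements of `O_λ`. -/
theorem zero_mem_partialConvexHull_iff_zero_sum (n : ℕ) (hn : 2 ≤ n)
    (lam : Fin n → ℝ) (hmono : Antitone lam) (hsum : ∑ i, lam i = 0)
    (r : ℕ) (hr : 1 ≤ r) :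
    (0 : Matrix (Fin n) (Fin n) ℂ) ∈ partialConvexHull r (coadjointOrbit lam) ↔
      ∃ A : Fin r → Matrix (Fin n) (Fin n) ℂ,
        (∀ i, A i ∈ coadjointOrbit lam) ∧ ∑ i, A i = 0 := by
  have : NeZero r := ⟨Nat.one_le_iff_ne_zero.1 hr⟩
  have horn := exists_mem_coadjointOrbit_sum_smul_eq_zero_iff hsum (ι := Fin r)
  rw [mem_partialConvexHull_iff]
  constructor
  · rintro ⟨p, hp, hzero⟩
    have hconst := HornSolvable.const_of_smul hmono hp ((horn p).1 hzero)
    simpa only [Pi.one_apply, one_smul] using (horn 1).2 (by simpa using hconst)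
  · rintro ⟨A, hA, hzero⟩
    have huniform : (fun _ => (r : ℝ)⁻¹) ∈ stdSimplex ℝ (Fin r) :=
      ⟨fun _ => by positivity, by simp [NeZero.ne r]⟩
    exact ⟨_, huniform, A, hA, by rw [← Finset.smul_sum, hzero, smul_zero]⟩
end
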